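/- arXiv:2401.11786 — 8 statements merged into one kernel-verified Lean document; each statement's English description precedes it below -/
import Mathlib

section
/- For every x ∈ S₊, the Rayleigh quotient equals the auxiliary function at the projected point: Rq(x) = φ(ψ(x)). -/
open Matrix

noncomputable def Mnorm {n : ℕ} (M : Matrix (Fin n) (Fin n) ℝ) (x : Fin n → ℝ) : ℝ :=
  Real.sqrt (x ⬝ᵥ (M *ᵥ x))

noncomputable def Rq {n : ℕ} (A M : Matrix (Fin n) (Fin n) ℝ) (x : Fin n → ℝ) : ℝ :=
  (x ⬝ᵥ (A *ᵥ x)) / (x ⬝ᵥ (M *ᵥ x))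

/-- ψ(x) = QᵀMx / (qᵀMx) -/
noncomputable def psiMap {n m : ℕ} (M : Matrix (Fin n) (Fin n) ℝ) (q : Fin n → ℝ)
    (Q : Matrix (Fin n) (Fin m) ℝ) (x : Fin n → ℝ) : Fin m → ℝ :=
  (q ⬝ᵥ (M *ᵥ x))⁻¹ • ((Qᵀ * M) *ᵥ x)

/-- ψ†(y) = (Qy + q)/‖Qy + q‖_M -/
noncomputable def psiDag {n m : ℕ} (M : Matrix (Fin n) (Fin n) ℝ) (q : Fin n → ℝ)
    (Q : Matrix (Fin n) (Fin m) ℝ) (y : Fin m → ℝ) : Fin n → ℝ :=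
  (Mnorm M (Q *ᵥ y + q))⁻¹ • (Q *ᵥ y + q)

/-- The hemisphere S₊ = {x : ‖x‖_M = 1, qᵀMx > 0}. -/
def Splus {n : ℕ} (M : Matrix (Fin n) (Fin n) ℝ) (q : Fin n → ℝ) : Set (Fin n → ℝ) :=
  {x | Mnorm M x = 1 ∧ 0 < q ⬝ᵥ (M *ᵥ x)}

/-- X = {x ∈ S₊ : Rq(x) ≤ Rq(q)}. -/
def Xset {n : ℕ} (A M : Matrix (Fin n) (Fin n) ℝ) (q : Fin n → ℝ) : Set (Fin n → ℝ) :=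
  {x | x ∈ Splus M q ∧ Rq A M x ≤ Rq A M q}

/-- φ(y) = (yᵀBy + 2yᵀb + ρ)/(yᵀy + 1). -/
noncomputable def phiAux {m : ℕ} (B : Matrix (Fin m) (Fin m) ℝ) (b : Fin m → ℝ) (ρ : ℝ)
    (y : Fin m → ℝ) : ℝ :=
  (y ⬝ᵥ (B *ᵥ y) + 2 * (y ⬝ᵥ b) + ρ) / (y ⬝ᵥ y + 1)

theorem aux_quad {n m : ℕ} (A : Matrix (Fin n) (Fin n) ℝ) (hA : Aᵀ = A)
    (q : Fin n → ℝ) (Q : Matrix (Fin n) (Fin m) ℝ) (t : ℝ) (w : Fin m → ℝ) :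
    (t • q + Q *ᵥ w) ⬝ᵥ (A *ᵥ (t • q + Q *ᵥ w)) =
      w ⬝ᵥ ((Qᵀ * A * Q) *ᵥ w) + 2 * t * (w ⬝ᵥ ((Qᵀ * A) *ᵥ q)) + t ^ 2 * (q ⬝ᵥ (A *ᵥ q)) := by
  have h1 : ∀ v : Fin n → ℝ, (Q *ᵥ w) ⬝ᵥ v = w ⬝ᵥ (Qᵀ *ᵥ v) := by
    intro v
    rw [Matrix.mulVec_transpose, dotProduct_comm w, ← Matrix.dotProduct_mulVec, dotProduct_comm]
  have h2 : q ⬝ᵥ (A *ᵥ (Q *ᵥ w)) = w ⬝ᵥ (Qᵀ *ᵥ (A *ᵥ q)) := by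
    rw [← h1, Matrix.dotProduct_mulVec, ← Matrix.mulVec_transpose, hA, dotProduct_comm]
  simp only [Matrix.mulVec_add, Matrix.mulVec_smul, add_dotProduct, dotProduct_add,
    smul_dotProduct, dotProduct_smul, smul_eq_mul, h2, ← Matrix.mulVec_mulVec]
  simp only [h1]
  ring

/-- For every x ∈ S₊, Rq(x) = φ(ψ(x)), where B = QᵀAQ, b = QᵀAq, ρ_q = Rq(q). -/
theorem stmt_1 (n : ℕ)
    (A M : Matrix (Fin (n+2)) (Fin (n+2)) ℝ)
    (hA : A.PosDef) (hM : M.PosDef)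
    (q : Fin (n+2) → ℝ) (Q : Matrix (Fin (n+2)) (Fin (n+1)) ℝ)
    (hq1 : q ⬝ᵥ (M *ᵥ q) = 1)
    (hQMQ : Qᵀ * M * Q = 1)
    (hQMq : (Qᵀ * M) *ᵥ q = 0)
    (B : Matrix (Fin (n+1)) (Fin (n+1)) ℝ) (hB : B = Qᵀ * A * Q)
    (b : Fin (n+1) → ℝ) (hb : b = (Qᵀ * A) *ᵥ q) :
    ∀ x ∈ Splus M q, Rq A M x = phiAux B b (Rq A M q) (psiMap M q Q x) := by
  intro x hx
  obtain ⟨-, ht⟩ := hx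
  have hAt : Aᵀ = A := by simpa using hA.isHermitian.eq
  have hMt : Mᵀ = M := by simpa using hM.isHermitian.eq
  have hqQ : ∀ w : Fin (n+1) → ℝ, q ⬝ᵥ (M *ᵥ (Q *ᵥ w)) = 0 := by
    intro w
    have h : (Q *ᵥ w) ⬝ᵥ (M *ᵥ q) = w ⬝ᵥ ((Qᵀ * M) *ᵥ q) := by
      rw [← Matrix.mulVec_mulVec, Matrix.mulVec_transpose, dotProduct_comm w,
        ← Matrix.dotProduct_mulVec, dotProduct_comm]
    rw [Matrix.dotProduct_mulVec, ← Matrix.mulVec_transpose, hMt, dotProduct_comm, h, hQMq]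
    simp
  have e1 : ∀ (t : ℝ) (w : Fin (n+1) → ℝ), q ⬝ᵥ (M *ᵥ (t • q + Q *ᵥ w)) = t := by
    intro t w
    rw [Matrix.mulVec_add, dotProduct_add, hqQ, Matrix.mulVec_smul, dotProduct_smul, hq1]
    simp
  have e2 : ∀ (t : ℝ) (w : Fin (n+1) → ℝ), (Qᵀ * M) *ᵥ (t • q + Q *ᵥ w) = w := by
    intro t w
    rw [Matrix.mulVec_add, Matrix.mulVec_smul, hQMq, Matrix.mulVec_mulVec, hQMQ]
    simp
  let L : (ℝ × (Fin (n+1) → ℝ)) →ₗ[ℝ] (Fin (n+2) → ℝ) :=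
    (LinearMap.toSpanSingleton ℝ _ q).coprod Q.mulVecLin
  have hL : ∀ p, L p = p.1 • q + Q *ᵥ p.2 := by
    intro p
    simp [L]
  have hinj : Function.Injective L := by
    intro p p' h
    rw [hL, hL] at h
    refine Prod.ext ?_ ?_
    · rw [← e1 p.1 p.2, h, e1]
    · rw [← e2 p.1 p.2, h, e2]
  have hsurj : Function.Surjective L := by
    refine (LinearMap.injective_iff_surjective_of_finrank_eq_finrank ?_).1 hinj
    simp
    ring
  obtain ⟨⟨t, w⟩, rfl⟩ := hsurj x
  rw [hL] at ht ⊢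
  simp only [e1] at ht
  simp only [Rq, phiAux, psiMap, e1, e2, aux_quad A hAt, aux_quad M hMt, hq1, hQMQ, hQMq, hB, hb,
    Matrix.mulVec_smul, smul_dotProduct, dotProduct_smul, smul_eq_mul, Matrix.one_mulVec,
    dotProduct_zero]
  have hw : 0 ≤ w ⬝ᵥ w := by
    simp only [dotProduct]
    exact Finset.sum_nonneg fun i _ => mul_self_nonneg _
  have h1 : w ⬝ᵥ w + 2 * t * 0 + t ^ 2 * 1 ≠ 0 := by positivity
  have h2 : t⁻¹ * (t⁻¹ * (w ⬝ᵥ w)) + 1 ≠ 0 := by positivity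
  rw [div_eq_div_iff h1 h2]
  field_simp
  ring
end

section
/- Under the condition λ₁ ≤ ρ_q < (λ₁+λ₂)/2, a point y ∈ ℝ^{n−1} belongs to Y if and only if φ(y) ≤ ρ_q; that is, Y coincides with the sublevel set {y ∈ ℝ^{n−1} : φ(y) ≤ ρ_q}. -/
open Matrix

theorem aux_complete {n : ℕ} (M : Matrix (Fin (n+2)) (Fin (n+2)) ℝ)
    (q : Fin (n+2) → ℝ) (Q : Matrix (Fin (n+2)) (Fin (n+1)) ℝ)
    (hq1 : q ⬝ᵥ (M *ᵥ q) = 1)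
    (hQMQ : Qᵀ * M * Q = 1)
    (hQMq : (Qᵀ * M) *ᵥ q = 0) (hqMQ : ∀ y, q ⬝ᵥ (M *ᵥ (Q *ᵥ y)) = 0)
    (x : Fin (n+2) → ℝ) :
    Q *ᵥ ((Qᵀ * M) *ᵥ x) + (q ⬝ᵥ (M *ᵥ x)) • q = x := by
  let L : (Fin (n+1) → ℝ) × ℝ →ₗ[ℝ] (Fin (n+2) → ℝ) :=
    { toFun := fun p => Q *ᵥ p.1 + p.2 • q
      map_add' := by
        intro a c
        simp only [Prod.fst_add, Prod.snd_add, mulVec_add, add_smul]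
        abel
      map_smul' := by
        intro a c
        simp [mulVec_smul, mul_smul] }
  have h1 : ∀ y (t : ℝ), (Qᵀ * M) *ᵥ (Q *ᵥ y + t • q) = y := by
    intro y t
    rw [mulVec_add, mulVec_mulVec, hQMQ, mulVec_smul, hQMq]; simp
  have h2 : ∀ y (t : ℝ), q ⬝ᵥ (M *ᵥ (Q *ᵥ y + t • q)) = t := by
    intro y t
    rw [mulVec_add, dotProduct_add, hqMQ, mulVec_smul, dotProduct_smul, hq1]; simp
  have hinj : Function.Injective L := by
    rintro ⟨y, t⟩ ⟨y', t'⟩ h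
    have h' : Q *ᵥ y + t • q = Q *ᵥ y' + t' • q := h
    have e1 := h1 y t
    have e2 := h2 y t
    rw [h', h1] at e1
    rw [h', h2] at e2
    rw [e1, e2]
  have hsurj : Function.Surjective L :=
    (LinearMap.injective_iff_surjective_of_finrank_eq_finrank (by simp)).1 hinj
  obtain ⟨⟨y, t⟩, h⟩ := hsurj x
  have h' : Q *ᵥ y + t • q = x := h
  rw [← h', h1, h2]

theorem aux_Rq_smul {n : ℕ} (A M : Matrix (Fin n) (Fin n) ℝ) (c : ℝ) (hc : c ≠ 0)
    (x : Fin n → ℝ) : Rq A M (c • x) = Rq A M x := by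
  unfold Rq
  simp only [mulVec_smul, dotProduct_smul, smul_dotProduct, smul_eq_mul]
  rw [← mul_assoc, ← mul_assoc, mul_div_mul_left _ _ (mul_ne_zero hc hc)]

theorem aux_symm {n : ℕ} (A : Matrix (Fin n) (Fin n) ℝ) (hA : A.PosDef) (x y : Fin n → ℝ) :
    x ⬝ᵥ (A *ᵥ y) = y ⬝ᵥ (A *ᵥ x) := by
  have h : Aᵀ = A := by
    have := hA.isHermitian.eq
    rwa [conjTranspose_eq_transpose_of_trivial] at this
  rw [dotProduct_mulVec, dotProduct_comm, ← mulVec_transpose, h]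

theorem aux_move {n m : ℕ} (A : Matrix (Fin n) (Fin n) ℝ) (Q : Matrix (Fin n) (Fin m) ℝ)
    (y : Fin m → ℝ) (x : Fin n → ℝ) :
    (Q *ᵥ y) ⬝ᵥ (A *ᵥ x) = y ⬝ᵥ ((Qᵀ * A) *ᵥ x) := by
  rw [← mulVec_mulVec, dotProduct_mulVec y, vecMul_transpose]

/-- Under λ₁ ≤ ρ_q < (λ₁+λ₂)/2, Y = ψ(X) coincides with the sublevel set
{y : φ(y) ≤ ρ_q}. -/
theorem stmt_2 (n : ℕ)
    (A M : Matrix (Fin (n+2)) (Fin (n+2)) ℝ)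
    (hA : A.PosDef) (hM : M.PosDef)
    (q : Fin (n+2) → ℝ) (Q : Matrix (Fin (n+2)) (Fin (n+1)) ℝ)
    (hq1 : q ⬝ᵥ (M *ᵥ q) = 1)
    (hQMQ : Qᵀ * M * Q = 1)
    (hQMq : (Qᵀ * M) *ᵥ q = 0)
    (lam : Fin (n+2) → ℝ) (u : Fin (n+2) → Fin (n+2) → ℝ)
    (hlam0 : 0 < lam 0) (hlam01 : lam 0 < lam 1) (hmono : Monotone lam)
    (heig : ∀ i, A *ᵥ u i = lam i • (M *ᵥ u i))
    (horth : ∀ i j, u i ⬝ᵥ (M *ᵥ u j) = if i = j then (1:ℝ) else 0)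
    (hqu1 : 0 < q ⬝ᵥ (M *ᵥ u 0))
    (B : Matrix (Fin (n+1)) (Fin (n+1)) ℝ) (hB : B = Qᵀ * A * Q)
    (b : Fin (n+1) → ℝ) (hb : b = (Qᵀ * A) *ᵥ q)
    (ρq : ℝ) (hρq : ρq = Rq A M q)
    (hρ1 : lam 0 ≤ ρq) (hρ2 : ρq < (lam 0 + lam 1) / 2) :
    psiMap M q Q '' (Xset A M q) = {y : Fin (n+1) → ℝ | phiAux B b ρq y ≤ ρq} := by
  have hqMQ : ∀ y, q ⬝ᵥ (M *ᵥ (Q *ᵥ y)) = 0 := by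
    intro y
    rw [aux_symm M hM, aux_move, hQMq, dotProduct_zero]
  have hden : ∀ y, (Q *ᵥ y + q) ⬝ᵥ (M *ᵥ (Q *ᵥ y + q)) = y ⬝ᵥ y + 1 := by
    intro y
    rw [mulVec_add, dotProduct_add, add_dotProduct, add_dotProduct, hqMQ, hq1, aux_move, aux_move,
      hQMq, mulVec_mulVec, hQMQ]
    simp
  have hρ' : q ⬝ᵥ (A *ᵥ q) = ρq := by rw [hρq, Rq, hq1, div_one]
  have hnum : ∀ y, (Q *ᵥ y + q) ⬝ᵥ (A *ᵥ (Q *ᵥ y + q)) = y ⬝ᵥ (B *ᵥ y) + 2 * (y ⬝ᵥ b) + ρq := by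
    intro y
    rw [mulVec_add, dotProduct_add, add_dotProduct, add_dotProduct, aux_symm A hA q (Q *ᵥ y), hρ',
      aux_move, aux_move, mulVec_mulVec, hB, hb]
    ring
  have hphi : ∀ y, phiAux B b ρq y = Rq A M (Q *ᵥ y + q) := by
    intro y
    rw [Rq, hden, hnum, phiAux]
  ext y
  simp only [Set.mem_image, Set.mem_setOf_eq]
  constructor
  · rintro ⟨x, ⟨⟨-, hx⟩, hxR⟩, rfl⟩
    have hc := aux_complete M q Q hq1 hQMQ hQMq hqMQ x
    have hz : Q *ᵥ psiMap M q Q x + q = (q ⬝ᵥ (M *ᵥ x))⁻¹ • x := by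
      conv_rhs => rw [← hc]
      rw [smul_add, smul_smul, hc, inv_mul_cancel₀ hx.ne', one_smul, psiMap, mulVec_smul]
    rw [hphi, hz, aux_Rq_smul _ _ _ (inv_ne_zero hx.ne'), hρq]
    exact hxR
  · intro hy
    have hpos : 0 < y ⬝ᵥ y + 1 := by
      have : 0 ≤ y ⬝ᵥ y := Finset.sum_nonneg fun i _ => mul_self_nonneg (y i)
      linarith
    set s := Mnorm M (Q *ᵥ y + q) with hs
    have hspos : 0 < s := by
      rw [hs, Mnorm, hden]; exact Real.sqrt_pos.2 hpos
    have hss : s * s = y ⬝ᵥ y + 1 := by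
      rw [hs, Mnorm, hden]; exact Real.mul_self_sqrt hpos.le
    have hqz : q ⬝ᵥ (M *ᵥ (s⁻¹ • (Q *ᵥ y + q))) = s⁻¹ := by
      rw [mulVec_smul, dotProduct_smul, mulVec_add, dotProduct_add, hqMQ, hq1]; simp
    refine ⟨s⁻¹ • (Q *ᵥ y + q), ⟨⟨?_, ?_⟩, ?_⟩, ?_⟩
    · rw [Mnorm, mulVec_smul, dotProduct_smul, smul_dotProduct, hden, ← hss, smul_eq_mul,
        smul_eq_mul]
      rw [show s⁻¹ * (s⁻¹ * (s * s)) = 1 by field_simp, Real.sqrt_one]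
    · rw [hqz]; exact inv_pos.2 hspos
    · rw [aux_Rq_smul _ _ _ (inv_ne_zero hspos.ne'), ← hphi, ← hρq]; exact hy
    · rw [psiMap, hqz, mulVec_smul, smul_smul, inv_inv, mul_inv_cancel₀ hspos.ne', one_smul,
        mulVec_add, hQMq, mulVec_mulVec, hQMQ]
      simp
end

section
/- Under the condition λ₁ ≤ ρ_q < (λ₁+λ₂)/2, for any x₁, x₂ ∈ X one has x₁ᵀMx₂ ≥ 1 − δ_M > 0, where δ_M = 2(ρ_q − λ₁)/(λ₂ − λ₁) < 1. -/
open Matrix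

theorem aux_real {m : ℕ} (c d : ℝ) (f g : Fin m → ℝ) (e : ℝ)
    (hf : c ^ 2 + ∑ i, f i ^ 2 = 1) (hg : d ^ 2 + ∑ i, g i ^ 2 = 1)
    (hfe : ∑ i, f i ^ 2 ≤ e) (hge : ∑ i, g i ^ 2 ≤ e) (he : e < 1 / 2) :
    |∑ i, f i * g i| ≤ e ∧ 1 - e ≤ |c * d| := by
  constructor
  · rw [abs_le]
    have h1 : ∑ i, f i * g i ≤ ∑ i, (f i ^ 2 + g i ^ 2) / 2 :=
      Finset.sum_le_sum fun i _ => by nlinarith [sq_nonneg (f i - g i)]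
    have h2 : ∑ i, -(f i * g i) ≤ ∑ i, (f i ^ 2 + g i ^ 2) / 2 :=
      Finset.sum_le_sum fun i _ => by nlinarith [sq_nonneg (f i + g i)]
    rw [← Finset.sum_div, Finset.sum_add_distrib] at h1 h2
    rw [Finset.sum_neg_distrib] at h2
    constructor <;> linarith
  · have hc : 1 - e ≤ c ^ 2 := by linarith
    have hd : 1 - e ≤ d ^ 2 := by linarith
    refine (sq_le_sq₀ (by linarith) (abs_nonneg _)).1 ?_
    rw [sq_abs, mul_pow, sq (1 - e)]
    exact mul_le_mul hc hd (by linarith) (sq_nonneg _)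

/-- Under λ₁ ≤ ρ_q < (λ₁+λ₂)/2, for any x₁, x₂ ∈ X, x₁ᵀMx₂ ≥ 1 − δ_M > 0,
where δ_M = 2(ρ_q − λ₁)/(λ₂ − λ₁) < 1. -/
theorem stmt_5 (n : ℕ)
    (A M : Matrix (Fin (n+2)) (Fin (n+2)) ℝ)
    (hA : A.PosDef) (hM : M.PosDef)
    (q : Fin (n+2) → ℝ)
    (lam : Fin (n+2) → ℝ) (u : Fin (n+2) → Fin (n+2) → ℝ)
    (hlam0 : 0 < lam 0) (hlam01 : lam 0 < lam 1) (hmono : Monotone lam)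
    (heig : ∀ i, A *ᵥ u i = lam i • (M *ᵥ u i))
    (horth : ∀ i j, u i ⬝ᵥ (M *ᵥ u j) = if i = j then (1:ℝ) else 0)
    (hqu1 : 0 < q ⬝ᵥ (M *ᵥ u 0))
    (hq1 : q ⬝ᵥ (M *ᵥ q) = 1)
    (ρq : ℝ) (hρq : ρq = Rq A M q)
    (hρ1 : lam 0 ≤ ρq) (hρ2 : ρq < (lam 0 + lam 1) / 2)
    (δM : ℝ) (hδM : δM = 2 * (ρq - lam 0) / (lam 1 - lam 0)) :
    δM < 1 ∧ 0 < 1 - δM ∧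
    ∀ x₁ ∈ Xset A M q, ∀ x₂ ∈ Xset A M q, 1 - δM ≤ x₁ ⬝ᵥ (M *ᵥ x₂) := by
  have hgap : 0 < lam 1 - lam 0 := by linarith
  have hδ1 : δM < 1 := by
    rw [hδM, div_lt_one hgap]; linarith
  refine ⟨hδ1, by linarith, ?_⟩
  let U : Matrix (Fin (n+2)) (Fin (n+2)) ℝ := Matrix.of u
  have hU : (U * M) * Uᵀ = 1 := by
    ext i j
    have := horth i j
    rw [Matrix.one_apply, ← this, Matrix.mul_assoc]
    simp only [Matrix.mul_apply, dotProduct, Matrix.mulVec, U, Matrix.of_apply,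
      Matrix.transpose_apply]
  have hU2 : Uᵀ * (U * M) = 1 := mul_eq_one_comm.1 hU
  have hAU : A * Uᵀ = M * Uᵀ * Matrix.diagonal lam := by
    ext i j
    have := congrFun (heig j) i
    rw [Matrix.mul_diagonal]
    simp only [Matrix.mulVec, dotProduct, Pi.smul_apply, smul_eq_mul] at this
    simp only [Matrix.mul_apply, U, Matrix.of_apply, Matrix.transpose_apply]
    rw [this, mul_comm]
  let C : (Fin (n+2) → ℝ) → Fin (n+2) → ℝ := fun x => (U * M) *ᵥ x
  have hC : ∀ x, x = Uᵀ *ᵥ C x := fun x => by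
    simp only [C]; rw [Matrix.mulVec_mulVec, hU2, Matrix.one_mulVec]
  have hMxy : ∀ x y, x ⬝ᵥ (M *ᵥ y) = ∑ i, C x i * C y i := fun x y => by
    conv_lhs => rw [hC x, hC y]
    rw [Matrix.mulVec_transpose, ← Matrix.dotProduct_mulVec, Matrix.mulVec_mulVec,
      Matrix.mulVec_mulVec, hU, Matrix.one_mulVec]
    rfl
  have hAxx : ∀ x, x ⬝ᵥ (A *ᵥ x) = ∑ i, lam i * C x i ^ 2 := fun x => by
    conv_lhs => rw [hC x]
    rw [Matrix.mulVec_transpose, ← Matrix.dotProduct_mulVec, ← Matrix.mulVec_transpose,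
      Matrix.mulVec_mulVec, Matrix.mulVec_mulVec, Matrix.mul_assoc, hAU, ← Matrix.mul_assoc, ← Matrix.mul_assoc, hU,
      Matrix.one_mul]
    simp only [dotProduct, Matrix.mulVec_diagonal]
    exact Finset.sum_congr rfl fun i _ => by ring
  have key : ∀ x, x ⬝ᵥ (M *ᵥ x) = 1 → Rq A M x ≤ ρq →
      C x 0 ^ 2 + ∑ i : Fin (n+1), C x i.succ ^ 2 = 1 ∧
      ∑ i : Fin (n+1), C x i.succ ^ 2 ≤ δM / 2 := by
    intro x hx hr
    rw [Rq, hx, div_one, hAxx, Fin.sum_univ_succ] at hr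
    rw [hMxy, Fin.sum_univ_succ] at hx
    have h1 : C x 0 ^ 2 + ∑ i : Fin (n+1), C x i.succ ^ 2 = 1 := by
      rw [← hx]; simp only [sq]
    refine ⟨h1, ?_⟩
    have h2 : lam 1 * ∑ i : Fin (n+1), C x i.succ ^ 2 ≤
        ∑ i : Fin (n+1), lam i.succ * C x i.succ ^ 2 := by
      rw [Finset.mul_sum]
      refine Finset.sum_le_sum fun i _ => mul_le_mul_of_nonneg_right (hmono ?_) (sq_nonneg _)
      rw [← Fin.succ_zero_eq_one]
      exact Fin.succ_le_succ_iff.2 (Fin.zero_le i)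
    have h3 : δM / 2 = (ρq - lam 0) / (lam 1 - lam 0) := by rw [hδM]; ring
    rw [h3, le_div_iff₀ hgap]
    have h4 : C x 0 ^ 2 = 1 - ∑ i : Fin (n+1), C x i.succ ^ 2 := by linarith
    rw [h4] at hr
    linarith
  have hu0 : ∀ x, x ⬝ᵥ (M *ᵥ u 0) = C x 0 := fun x => by
    have h0 : C (u 0) = Pi.single 0 1 := by
      ext j
      have := horth j 0
      simp only [C]
      rw [← Matrix.mulVec_mulVec]
      rw [Pi.single_apply, ← this]
      rfl
    rw [hMxy, h0]; simp [Pi.single_apply]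
  have hq0 : 0 < C q 0 := by rw [← hu0]; exact hqu1
  have hqk := key q hq1 hρq.ge
  have main : ∀ x ∈ Xset A M q, x ⬝ᵥ (M *ᵥ x) = 1 ∧ 0 < C x 0 := by
    rintro x ⟨⟨hn, hp⟩, hr⟩
    have hx : x ⬝ᵥ (M *ᵥ x) = 1 := Real.sqrt_eq_one.1 hn
    refine ⟨hx, ?_⟩
    have hk := key x hx (hρq ▸ hr)
    obtain ⟨h1, h2⟩ := aux_real _ _ _ _ _ hqk.1 hk.1 hqk.2 hk.2 (by linarith)
    rw [hMxy, Fin.sum_univ_succ] at hp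
    by_contra hneg
    rw [abs_of_nonpos (mul_nonpos_of_nonneg_of_nonpos hq0.le (not_lt.1 hneg))] at h2
    linarith [(abs_le.1 h1).2]
  intro x hx y hy
  obtain ⟨hx1, hx0⟩ := main x hx
  obtain ⟨hy1, hy0⟩ := main y hy
  have hkx := key x hx1 (hρq ▸ hx.2)
  have hky := key y hy1 (hρq ▸ hy.2)
  obtain ⟨h1, h2⟩ := aux_real _ _ _ _ _ hkx.1 hky.1 hkx.2 hky.2 (by linarith)
  rw [abs_of_pos (mul_pos hx0 hy0)] at h2
  rw [hMxy, Fin.sum_univ_succ]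
  linarith [(abs_le.1 h1).1]
end

section
/- Under the condition λ₁ ≤ ρ_q < (λ₁+λ₂)/2, for any y ∈ Y with x = ψ†(y), one has yᵀy/(1 + yᵀy) = 1 − (xᵀMq)² ≤ 2δ_M, and consequently 1 − 2δ_M ≤ 1/(1 + yᵀy) ≤ 1, where δ_M = 2(ρ_q − λ₁)/(λ₂ − λ₁). -/
open Matrix

lemma aux_real_s6 (a b r s p e : ℝ) (ha : a^2 + r = 1) (hb : b^2 + s = 1) (hr0 : 0 ≤ r) (hs0 : 0 ≤ s)
    (hr : r ≤ e) (hs : s ≤ e) (he : e < 1/2) (hp : p^2 ≤ r * s) (ht : 0 < a*b+p) :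
    1 - (a*b+p)^2 ≤ 4 * e := by
  have he0 : 0 ≤ e := hr0.trans hr
  have hp2 : p^2 ≤ e^2 := by
    have : r * s ≤ e * e := mul_le_mul hr hs hs0 he0
    nlinarith
  have hpe := abs_le.1 (abs_le_of_sq_le_sq hp2 he0)
  have hab : (1-e)^2 ≤ (a*b)^2 := by
    have : (1-e)*(1-e) ≤ (1-r)*(1-s) := mul_le_mul (by linarith) (by linarith) (by linarith) (by linarith)
    have h1 : a^2 = 1 - r := by linarith
    have h2 : b^2 = 1 - s := by linarith
    rw [mul_pow, h1, h2]; nlinarith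
  have hab' : 1 - e ≤ |a*b| := by
    have := sq_le_sq.1 hab
    rwa [abs_of_nonneg (by linarith : (0:ℝ) ≤ 1 - e)] at this
  have h3 : 1 - e ≤ a * b := by
    rcases le_abs.1 hab' with h | h
    · exact h
    · linarith [hpe.2]
  have h4 : 1 - 2*e ≤ a*b+p := by linarith [hpe.1]
  have h5 : (1-2*e)^2 ≤ (a*b+p)^2 := pow_le_pow_left₀ (by linarith) h4 2
  nlinarith [sq_nonneg e]

lemma aux_spec (n : ℕ) (lam c : Fin (n+2) → ℝ) (ρ : ℝ) (hlam01 : lam 0 < lam 1)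
    (hmono : Monotone lam) (h1 : ∑ i, c i * c i = 1) (h2 : ∑ i, c i * (lam i * c i) ≤ ρ) :
    ∑ i : Fin (n+1), c i.succ ^ 2 ≤ (ρ - lam 0) / (lam 1 - lam 0) := by
  rw [le_div_iff₀ (by linarith)]
  rw [Fin.sum_univ_succ] at h1 h2
  have h3 : ∑ i : Fin (n+1), lam 1 * c i.succ ^ 2 ≤ ∑ i : Fin (n+1), c i.succ * (lam i.succ * c i.succ) := by
    apply Finset.sum_le_sum
    intro i _
    have : lam 1 ≤ lam i.succ := hmono (by rw [← Fin.succ_zero_eq_one]; exact Fin.succ_le_succ_iff.2 (Fin.zero_le i))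
    nlinarith [sq_nonneg (c i.succ)]
  rw [← Finset.mul_sum] at h3
  have h4 : ∑ i : Fin (n+1), c i.succ * c i.succ = ∑ i : Fin (n+1), c i.succ ^ 2 := by
    simp only [sq]
  rw [h4] at h1
  have : c 0 * c 0 = 1 - ∑ i : Fin (n+1), c i.succ ^ 2 := by linarith
  have h5 : c 0 * (lam 0 * c 0) = lam 0 * (c 0 * c 0) := by ring
  rw [h5, this] at h2
  linarith

lemma aux_psd {n : ℕ} {M : Matrix (Fin n) (Fin n) ℝ} (hM : M.PosDef) (z : Fin n → ℝ) :
    0 ≤ z ⬝ᵥ (M *ᵥ z) := by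
  have := hM.posSemidef.dotProduct_mulVec_nonneg z
  simpa using this

lemma aux_symm_s6 {n : ℕ} {M : Matrix (Fin n) (Fin n) ℝ} (hM : M.PosDef) (x z : Fin n → ℝ) :
    x ⬝ᵥ (M *ᵥ z) = z ⬝ᵥ (M *ᵥ x) := by
  have h : Mᵀ = M := by simpa using hM.1.eq
  rw [dotProduct_mulVec, ← mulVec_transpose, h, dotProduct_comm]

lemma aux_tr {n m : ℕ} (M : Matrix (Fin n) (Fin n) ℝ) (Q : Matrix (Fin n) (Fin m) ℝ)
    (y : Fin m → ℝ) (z : Fin n → ℝ) :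
    (Q *ᵥ y) ⬝ᵥ (M *ᵥ z) = y ⬝ᵥ ((Qᵀ * M) *ᵥ z) := by
  rw [← mulVec_mulVec, dotProduct_mulVec y, vecMul_transpose]

/-- Under λ₁ ≤ ρ_q < (λ₁+λ₂)/2, for y ∈ Y with x = ψ†(y):
yᵀy/(1+yᵀy) = 1 − (xᵀMq)² ≤ 2δ_M, and 1 − 2δ_M ≤ 1/(1+yᵀy) ≤ 1. -/
theorem stmt_6 (n : ℕ)
    (A M : Matrix (Fin (n+2)) (Fin (n+2)) ℝ)
    (hA : A.PosDef) (hM : M.PosDef)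
    (q : Fin (n+2) → ℝ) (Q : Matrix (Fin (n+2)) (Fin (n+1)) ℝ)
    (hq1 : q ⬝ᵥ (M *ᵥ q) = 1)
    (hQMQ : Qᵀ * M * Q = 1)
    (hQMq : (Qᵀ * M) *ᵥ q = 0)
    (lam : Fin (n+2) → ℝ) (u : Fin (n+2) → Fin (n+2) → ℝ)
    (hlam0 : 0 < lam 0) (hlam01 : lam 0 < lam 1) (hmono : Monotone lam)
    (heig : ∀ i, A *ᵥ u i = lam i • (M *ᵥ u i))
    (horth : ∀ i j, u i ⬝ᵥ (M *ᵥ u j) = if i = j then (1:ℝ) else 0)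
    (hqu1 : 0 < q ⬝ᵥ (M *ᵥ u 0))
    (ρq : ℝ) (hρq : ρq = Rq A M q)
    (hρ1 : lam 0 ≤ ρq) (hρ2 : ρq < (lam 0 + lam 1) / 2)
    (δM : ℝ) (hδM : δM = 2 * (ρq - lam 0) / (lam 1 - lam 0)) :
    ∀ y ∈ psiMap M q Q '' (Xset A M q),
      (y ⬝ᵥ y) / (1 + y ⬝ᵥ y) = 1 - (psiDag M q Q y ⬝ᵥ (M *ᵥ q)) ^ 2 ∧
      (y ⬝ᵥ y) / (1 + y ⬝ᵥ y) ≤ 2 * δM ∧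
      1 - 2 * δM ≤ 1 / (1 + y ⬝ᵥ y) ∧
      1 / (1 + y ⬝ᵥ y) ≤ 1 := by
  rintro y ⟨x, ⟨⟨hx1, ht⟩, hxR⟩, rfl⟩
  have hx1' : x ⬝ᵥ (M *ᵥ x) = 1 := by
    unfold Mnorm at hx1
    exact Real.sqrt_eq_one.1 hx1
  have hQQ : ∀ w : Fin (n+1) → ℝ, (Q *ᵥ w) ⬝ᵥ (M *ᵥ (Q *ᵥ w)) = w ⬝ᵥ w := by
    intro w
    rw [aux_tr, mulVec_mulVec, hQMQ, one_mulVec]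
  have hQq : ∀ w : Fin (n+1) → ℝ, (Q *ᵥ w) ⬝ᵥ (M *ᵥ q) = 0 := by
    intro w
    rw [aux_tr, hQMq, dotProduct_zero]
  have hqQ : ∀ w : Fin (n+1) → ℝ, q ⬝ᵥ (M *ᵥ (Q *ᵥ w)) = 0 := by
    intro w
    rw [aux_symm_s6 hM, hQq]
  -- spectral part
  have hkey : 1 - (q ⬝ᵥ (M *ᵥ x))^2 ≤ 2 * δM := by
    have hqA : q ⬝ᵥ (A *ᵥ q) = ρq := by rw [hρq, Rq, hq1, div_one]
    have hxA : x ⬝ᵥ (A *ᵥ x) ≤ ρq := by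
      rw [hρq]; rw [Rq, hx1', div_one] at hxR; exact hxR
    have hUMU : (Matrix.of u) * (M * (Matrix.of u)ᵀ) = 1 := by
      ext i j
      rw [Matrix.one_apply, ← horth i j]
      rfl
    have hinv : (Matrix.of u)ᵀ * ((Matrix.of u) * M) = 1 := by
      rw [← Matrix.mul_assoc] at hUMU
      exact mul_eq_one_comm.1 hUMU
    have hex : ∀ z : Fin (n+2) → ℝ, ∃ c, z = (Matrix.of u)ᵀ *ᵥ c := by
      intro z
      refine ⟨((Matrix.of u) * M) *ᵥ z, ?_⟩
      rw [mulVec_mulVec, hinv, one_mulVec]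
    have hbM : ∀ c d : Fin (n+2) → ℝ,
        ((Matrix.of u)ᵀ *ᵥ c) ⬝ᵥ (M *ᵥ ((Matrix.of u)ᵀ *ᵥ d)) = ∑ i, c i * d i := by
      intro c d
      rw [aux_tr, mulVec_mulVec, transpose_transpose, Matrix.mul_assoc, hUMU, one_mulVec]
      rfl
    have hUAU : (Matrix.of u) * (A * (Matrix.of u)ᵀ) = Matrix.diagonal lam := by
      ext i j
      have h1 : ((Matrix.of u) * (A * (Matrix.of u)ᵀ)) i j = u i ⬝ᵥ (A *ᵥ u j) := rfl
      rw [h1, heig, dotProduct_smul, horth, Matrix.diagonal_apply]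
      by_cases h : i = j
      · simp [h]
      · simp [h]
    have hbA : ∀ c : Fin (n+2) → ℝ,
        ((Matrix.of u)ᵀ *ᵥ c) ⬝ᵥ (A *ᵥ ((Matrix.of u)ᵀ *ᵥ c)) = ∑ i, c i * (lam i * c i) := by
      intro c
      rw [aux_tr, mulVec_mulVec, transpose_transpose, Matrix.mul_assoc, hUAU]
      simp only [dotProduct, mulVec_diagonal]
    obtain ⟨c, hc⟩ := hex x
    obtain ⟨d, hd⟩ := hex q
    have hc1 : ∑ i, c i * c i = 1 := by rw [← hbM, ← hc, hx1']
    have hd1 : ∑ i, d i * d i = 1 := by rw [← hbM, ← hd, hq1]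
    have hc2 : ∑ i, c i * (lam i * c i) ≤ ρq := by rw [← hbA, ← hc]; exact hxA
    have hd2 : ∑ i, d i * (lam i * d i) ≤ ρq := by rw [← hbA, ← hd]; exact hqA.le
    have hr := aux_spec n lam c ρq hlam01 hmono hc1 hc2
    have hs := aux_spec n lam d ρq hlam01 hmono hd1 hd2
    have hdc : q ⬝ᵥ (M *ᵥ x) = d 0 * c 0 + ∑ i : Fin (n+1), d i.succ * c i.succ := by
      rw [← Fin.sum_univ_succ (fun i => d i * c i), ← hbM, ← hc, ← hd]
    rw [hdc] at ht ⊢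
    rw [Fin.sum_univ_succ] at hc1 hd1
    have := aux_real_s6 (d 0) (c 0) (∑ i : Fin (n+1), d i.succ ^ 2) (∑ i : Fin (n+1), c i.succ ^ 2)
      (∑ i : Fin (n+1), d i.succ * c i.succ) ((ρq - lam 0) / (lam 1 - lam 0))
      (by simpa only [sq] using hd1) (by simpa only [sq] using hc1)
      (Finset.sum_nonneg fun i _ => sq_nonneg _) (Finset.sum_nonneg fun i _ => sq_nonneg _)
      hs hr (by rw [div_lt_iff₀ (by linarith)]; linarith)
      (Finset.sum_mul_sq_le_sq_mul_sq _ _ _) ht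
    have h4 : 2 * δM = 4 * ((ρq - lam 0) / (lam 1 - lam 0)) := by rw [hδM]; ring
    rw [h4]; exact this
  -- Bessel
  have hbes : ((Qᵀ * M) *ᵥ x) ⬝ᵥ ((Qᵀ * M) *ᵥ x) + (q ⬝ᵥ (M *ᵥ x))^2 ≤ 1 := by
    set w := (Qᵀ * M) *ᵥ x with hw
    set t := q ⬝ᵥ (M *ᵥ x) with ht'
    have h0 := aux_psd hM (x - t • q - Q *ᵥ w)
    have e1 : x ⬝ᵥ (M *ᵥ q) = t := aux_symm_s6 hM _ _
    have e2 : (Q *ᵥ w) ⬝ᵥ (M *ᵥ x) = w ⬝ᵥ w := aux_tr _ _ _ _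
    have e3 : x ⬝ᵥ (M *ᵥ (Q *ᵥ w)) = w ⬝ᵥ w := by rw [aux_symm_s6 hM, e2]
    simp only [mulVec_sub, mulVec_smul, dotProduct_sub, sub_dotProduct, smul_dotProduct,
      dotProduct_smul, smul_eq_mul, hQQ, hQq, hqQ, e1, e2, e3, hq1, hx1', ← ht'] at h0
    nlinarith
  have hyy : 1 + psiMap M q Q x ⬝ᵥ psiMap M q Q x ≤ ((q ⬝ᵥ (M *ᵥ x))^2)⁻¹ := by
    simp only [psiMap, smul_dotProduct, dotProduct_smul, smul_eq_mul]
    set t := q ⬝ᵥ (M *ᵥ x) with ht'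
    set W := ((Qᵀ * M) *ᵥ x) ⬝ᵥ ((Qᵀ * M) *ᵥ x)
    have : 1 + t⁻¹ * (t⁻¹ * W) = (W + t^2) * (t^2)⁻¹ := by field_simp; ring
    rw [this]
    exact mul_le_of_le_one_left (by positivity) hbes
  generalize psiMap M q Q x = y at hyy ⊢
  have hy0 : 0 ≤ y ⬝ᵥ y := by
    unfold dotProduct
    exact Finset.sum_nonneg fun i _ => mul_self_nonneg _
  have hinv : (q ⬝ᵥ (M *ᵥ x))^2 ≤ 1 / (1 + y ⬝ᵥ y) := by
    rw [one_div]
    exact (le_inv_comm₀ (by linarith) (by positivity)).1 hyy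
  have hdiv : (y ⬝ᵥ y) / (1 + y ⬝ᵥ y) = 1 - 1 / (1 + y ⬝ᵥ y) := by
    have : (1 + y ⬝ᵥ y) ≠ 0 := by positivity
    field_simp; ring
  refine ⟨?_, by rw [hdiv]; linarith, by linarith, ?_⟩
  · have e1 : (Q *ᵥ y + q) ⬝ᵥ (M *ᵥ q) = 1 := by
      rw [add_dotProduct, hQq, hq1, zero_add]
    have e2 : (Q *ᵥ y + q) ⬝ᵥ (M *ᵥ (Q *ᵥ y + q)) = 1 + y ⬝ᵥ y := by
      rw [mulVec_add, dotProduct_add, e1, add_dotProduct, hQQ, hqQ]; ring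
    rw [hdiv, psiDag, smul_dotProduct, e1, Mnorm, e2, smul_eq_mul, mul_one, inv_pow,
      Real.sq_sqrt (by linarith), one_div]
  · rw [div_le_one (by linarith)]; linarith
end

section
/- For any y ∈ ℝ^{n−1} with x = ψ†(y), the gradient of the auxiliary function satisfies ∇φ(y) = Qᵀ∇Rq(x)/(1 + ‖y‖²)^{1/2}, where ∇Rq(x) = 2(Ax − Rq(x)Mx) and ∇φ(y) = (2/(yᵀy+1))·(By − φ(y)y + b). -/
open Matrix

/-- ∇φ(y) = (2/(yᵀy+1))(By − φ(y)y + b). -/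
noncomputable def gradPhi {m : ℕ} (B : Matrix (Fin m) (Fin m) ℝ) (b : Fin m → ℝ) (ρ : ℝ)
    (y : Fin m → ℝ) : Fin m → ℝ :=
  (2 / (y ⬝ᵥ y + 1)) • (B *ᵥ y - phiAux B b ρ y • y + b)

theorem quad_expand {n m : ℕ} (S : Matrix (Fin n) (Fin n) ℝ) (hS : Sᵀ = S)
    (q : Fin n → ℝ) (Q : Matrix (Fin n) (Fin m) ℝ) (y : Fin m → ℝ) :
    (Q *ᵥ y + q) ⬝ᵥ (S *ᵥ (Q *ᵥ y + q)) =
      y ⬝ᵥ ((Qᵀ * S * Q) *ᵥ y) + 2 * (y ⬝ᵥ ((Qᵀ * S) *ᵥ q)) + q ⬝ᵥ (S *ᵥ q) := by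
  have h1 : ∀ v : Fin n → ℝ, (Q *ᵥ y) ⬝ᵥ v = y ⬝ᵥ (Qᵀ *ᵥ v) := by
    intro v
    rw [Matrix.dotProduct_mulVec, Matrix.vecMul_transpose]
  have h2 : q ⬝ᵥ (S *ᵥ (Q *ᵥ y)) = y ⬝ᵥ (Qᵀ *ᵥ (S *ᵥ q)) := by
    rw [← h1, Matrix.dotProduct_mulVec, ← Matrix.mulVec_transpose, hS, dotProduct_comm]
  simp only [Matrix.mulVec_add, dotProduct_add, add_dotProduct, h2, h1,
    ← Matrix.mulVec_mulVec]
  ring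

/-- For any y ∈ ℝ^{n−1} with x = ψ†(y):
∇φ(y) = Qᵀ∇Rq(x)/√(1+‖y‖²), where ∇Rq(x) = 2(Ax − Rq(x)Mx). -/
theorem stmt_7 (n : ℕ)
    (A M : Matrix (Fin (n+2)) (Fin (n+2)) ℝ)
    (hA : A.PosDef) (hM : M.PosDef)
    (q : Fin (n+2) → ℝ) (Q : Matrix (Fin (n+2)) (Fin (n+1)) ℝ)
    (hq1 : q ⬝ᵥ (M *ᵥ q) = 1)
    (hQMQ : Qᵀ * M * Q = 1)
    (hQMq : (Qᵀ * M) *ᵥ q = 0)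
    (B : Matrix (Fin (n+1)) (Fin (n+1)) ℝ) (hB : B = Qᵀ * A * Q)
    (b : Fin (n+1) → ℝ) (hb : b = (Qᵀ * A) *ᵥ q)
    (ρq : ℝ) (hρq : ρq = Rq A M q) :
    ∀ y : Fin (n+1) → ℝ,
      gradPhi B b ρq y =
        (Real.sqrt (1 + y ⬝ᵥ y))⁻¹ •
          (Qᵀ *ᵥ ((2 : ℝ) • (A *ᵥ psiDag M q Q y -
            Rq A M (psiDag M q Q y) • (M *ᵥ psiDag M q Q y)))) := by
  intro y
  have hAs : Aᵀ = A := by simpa using hA.isHermitian.eq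
  have hMs : Mᵀ = M := by simpa using hM.isHermitian.eq
  have eA := quad_expand A hAs q Q y
  have eM := quad_expand M hMs q Q y
  rw [hQMQ, hQMq, hq1, Matrix.one_mulVec, dotProduct_zero, mul_zero, add_zero] at eM
  have hyy : 0 ≤ y ⬝ᵥ y := by
    simpa using dotProduct_star_self_nonneg y
  have hpos : 0 < y ⬝ᵥ y + 1 := by linarith
  have hρ : ρq = q ⬝ᵥ (A *ᵥ q) := by rw [hρq, Rq, hq1, div_one]
  rw [← hB, ← hb, ← hρ] at eA
  have hs : 0 < Real.sqrt (y ⬝ᵥ y + 1) := Real.sqrt_pos.mpr hpos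
  have hss : Real.sqrt (y ⬝ᵥ y + 1) * Real.sqrt (y ⬝ᵥ y + 1) = y ⬝ᵥ y + 1 :=
    Real.mul_self_sqrt hpos.le
  have hpsi : psiDag M q Q y = (Real.sqrt (y ⬝ᵥ y + 1))⁻¹ • (Q *ᵥ y + q) := by
    rw [psiDag, Mnorm, eM]
  have hR : Rq A M (psiDag M q Q y) = phiAux B b ρq y := by
    rw [hpsi, Rq, phiAux]
    simp only [Matrix.mulVec_smul, dotProduct_smul, smul_dotProduct, eA, eM, smul_eq_mul]
    field_simp
  have hQA : Qᵀ *ᵥ (A *ᵥ (Q *ᵥ y + q)) = B *ᵥ y + b := by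
    rw [hB, hb]
    simp only [Matrix.mulVec_add, ← Matrix.mulVec_mulVec]
  have hQM : Qᵀ *ᵥ (M *ᵥ (Q *ᵥ y + q)) = y := by
    rw [Matrix.mulVec_mulVec, Matrix.mulVec_add, hQMq, add_zero, Matrix.mulVec_mulVec, hQMQ,
      Matrix.one_mulVec]
  rw [hR, hpsi, gradPhi, add_comm 1 (y ⬝ᵥ y)]
  simp only [Matrix.mulVec_smul, Matrix.mulVec_sub, hQA, hQM]
  rw [← hss]
  generalize phiAux B b ρq y = p
  ext i
  simp only [Pi.smul_apply, Pi.add_apply, Pi.sub_apply, smul_eq_mul]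
  rw [hss]
  generalize Real.sqrt (y ⬝ᵥ y + 1) = s at *
  rw [← hss]
  field_simp
  ring
end

section
/- Under the condition λ₁ ≤ ρ_q < λ₂, for any x ∈ X with ρ = Rq(x), the gradient of the Rayleigh quotient satisfies ‖∇Rq(x)‖²_{A⁻¹} ≤ 4ρ(ρ − λ₁)/λ₁, where ∇Rq(x) = 2(Ax − ρMx) and ‖v‖²_{A⁻¹} = vᵀA⁻¹v. -/
open Matrix

/-- Under λ₁ ≤ ρ_q < λ₂, for any x ∈ X with ρ = Rq(x):
‖∇Rq(x)‖²_{A⁻¹} ≤ 4ρ(ρ − λ₁)/λ₁, where ∇Rq(x) = 2(Ax − ρMx). -/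
theorem stmt_8 (n : ℕ)
    (A M : Matrix (Fin (n+2)) (Fin (n+2)) ℝ)
    (hA : A.PosDef) (hM : M.PosDef)
    (q : Fin (n+2) → ℝ)
    (lam : Fin (n+2) → ℝ) (u : Fin (n+2) → Fin (n+2) → ℝ)
    (hlam0 : 0 < lam 0) (hlam01 : lam 0 < lam 1) (hmono : Monotone lam)
    (heig : ∀ i, A *ᵥ u i = lam i • (M *ᵥ u i))
    (horth : ∀ i j, u i ⬝ᵥ (M *ᵥ u j) = if i = j then (1:ℝ) else 0)
    (hqu1 : 0 < q ⬝ᵥ (M *ᵥ u 0))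
    (hq1 : q ⬝ᵥ (M *ᵥ q) = 1)
    (ρq : ℝ) (hρq : ρq = Rq A M q)
    (hρ1 : lam 0 ≤ ρq) (hρ2 : ρq < lam 1) :
    ∀ x ∈ Xset A M q,
      ((2 : ℝ) • (A *ᵥ x - Rq A M x • (M *ᵥ x))) ⬝ᵥ
          (A⁻¹ *ᵥ ((2 : ℝ) • (A *ᵥ x - Rq A M x • (M *ᵥ x)))) ≤
        4 * Rq A M x * (Rq A M x - lam 0) / lam 0 := by
  intro x hx
  have hx1 : x ⬝ᵥ (M *ᵥ x) = 1 := by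
    have h := hx.1.1
    unfold Mnorm at h
    exact Real.sqrt_eq_one.mp h
  have hpos : ∀ i, 0 < lam i := fun i => lt_of_lt_of_le hlam0 (hmono (Fin.zero_le i))
  have hdet : IsUnit A.det := (Matrix.isUnit_iff_isUnit_det A).mp hA.isUnit
  set U : Matrix (Fin (n+2)) (Fin (n+2)) ℝ := (Matrix.of u)ᵀ with hU
  have hcol : ∀ i, U.col i = u i := fun i => rfl
  have hUMU : Uᵀ * (M * U) = 1 := by
    ext i j
    rw [Matrix.one_apply, ← horth i j]
    rfl
  have hdot : ∀ a b : Fin (n+2) → ℝ, (U *ᵥ a) ⬝ᵥ (M *ᵥ (U *ᵥ b)) = a ⬝ᵥ b := by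
    intro a b
    rw [← Matrix.vecMul_transpose, ← Matrix.dotProduct_mulVec, Matrix.mulVec_mulVec,
      Matrix.mulVec_mulVec, Matrix.mul_assoc, hUMU, Matrix.one_mulVec]
  have hAU : A * U = M * U * Matrix.diagonal lam := by
    ext i j
    rw [Matrix.mul_diagonal]
    have := congrFun (heig j) i
    rw [Pi.smul_apply, smul_eq_mul, mul_comm] at this
    exact this
  have hinv : U * (Uᵀ * M) = 1 := by
    apply mul_eq_one_comm.mp
    rw [Matrix.mul_assoc, hUMU]
  obtain ⟨c, hc⟩ : ∃ c, x = U *ᵥ c :=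
    ⟨(Uᵀ * M) *ᵥ x, by rw [Matrix.mulVec_mulVec, hinv, Matrix.one_mulVec]⟩
  have hz : A⁻¹ *ᵥ (M *ᵥ x) = U *ᵥ (fun i => c i / lam i) := by
    have h : A *ᵥ (U *ᵥ (fun i => c i / lam i)) = M *ᵥ x := by
      rw [Matrix.mulVec_mulVec, hAU, hc, ← Matrix.mulVec_mulVec, ← Matrix.mulVec_mulVec]
      congr 2
      ext i
      rw [Matrix.mulVec_diagonal]
      have := (hpos i).ne'
      field_simp
    rw [← h, Matrix.mulVec_mulVec, Matrix.nonsing_inv_mul A hdet, Matrix.one_mulVec]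
  have hAx : A⁻¹ *ᵥ (A *ᵥ x) = x := by
    rw [Matrix.mulVec_mulVec, Matrix.nonsing_inv_mul A hdet, Matrix.one_mulVec]
  have hsymA : ∀ a b : Fin (n+2) → ℝ, (A *ᵥ a) ⬝ᵥ b = a ⬝ᵥ (A *ᵥ b) := by
    intro a b
    have : Aᵀ = A := by simpa using hA.isHermitian.eq
    rw [← Matrix.vecMul_transpose, this, ← Matrix.dotProduct_mulVec]
  have hsymM : ∀ a b : Fin (n+2) → ℝ, (M *ᵥ a) ⬝ᵥ b = a ⬝ᵥ (M *ᵥ b) := by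
    intro a b
    have : Mᵀ = M := by simpa using hM.isHermitian.eq
    rw [← Matrix.vecMul_transpose, this, ← Matrix.dotProduct_mulVec]
  have hR : Rq A M x = x ⬝ᵥ (A *ᵥ x) := by rw [Rq, hx1, div_one]
  have hρ : 0 ≤ Rq A M x := by
    rw [hR]
    simpa using hA.posSemidef.dotProduct_mulVec_nonneg x
  set ρ := Rq A M x with hρdef
  set z := U *ᵥ (fun i => c i / lam i) with hzdef
  have hAz : A *ᵥ z = M *ᵥ x := by
    rw [← hz, Matrix.mulVec_mulVec, Matrix.mul_nonsing_inv A hdet, Matrix.one_mulVec]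
  have hw : x ⬝ᵥ (M *ᵥ z) ≤ 1 / lam 0 := by
    rw [← hx1, hzdef, hc, hdot, hdot, dotProduct, dotProduct, Finset.sum_div]
    apply Finset.sum_le_sum
    intro i _
    rw [← mul_div_assoc]
    exact div_le_div_of_nonneg_left (mul_self_nonneg _) hlam0 (hmono (Fin.zero_le i))
  have key : ((2 : ℝ) • (A *ᵥ x - ρ • (M *ᵥ x))) ⬝ᵥ
          (A⁻¹ *ᵥ ((2 : ℝ) • (A *ᵥ x - ρ • (M *ᵥ x)))) = 4 * (ρ ^ 2 * (x ⬝ᵥ (M *ᵥ z)) - ρ) := by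
    rw [Matrix.mulVec_smul, Matrix.mulVec_sub, Matrix.mulVec_smul, hz, hAx]
    simp only [smul_dotProduct, dotProduct_smul, sub_dotProduct, dotProduct_sub, hsymA, hsymM,
      hAz, hx1, ← hR, smul_eq_mul]
    ring
  rw [key]
  have h2 : 4 * ρ * (ρ - lam 0) / lam 0 = 4 * (ρ ^ 2 * (1 / lam 0) - ρ) := by
    field_simp
  rw [h2]
  have := mul_le_mul_of_nonneg_left hw (sq_nonneg ρ)
  linarith
end

section
/- Under the condition λ₁ ≤ ρ_q < (λ₁+λ₂)/2, for any y ∈ Y the symmetric matrix ∇φ(y)yᵀ + y(∇φ(y))ᵀ satisfies the Loewner-order bounds −χ_g B ⪯ ∇φ(y)yᵀ + y(∇φ(y))ᵀ ⪯ χ_g B, where ∇φ(y) = (2/(yᵀy+1))·(By − φ(y)y + b) and χ_g = (8(ρ_q − λ₁)/λ₁)·((λ₁+λ₂)/(2(λ₂−λ₁)))^{1/2}. -/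
open Matrix

lemma aux_scalar (a d f r α β γ X2 Z2 Y2 ZX YZ Z N R T : ℝ) (hlam0 : 0 < a) (hlam01 : a < d)
    (hr2 : r < (a + d) / 2) (hf : f ≤ r) (hfa : a ≤ f)
    (hres : R^2 ≤ (f * (f - a) / a) * N)
    (hx1 : d * 1 - (d - a) * (α * α) ≤ f) (hy1 : d * 1 - (d - a) * (β * β) ≤ r)
    (hz1 : d * Z - (d - a) * (γ * γ) ≤ N) (hZ' : Z = γ * γ + Z2) (hT' : T = γ * α + ZX)
    (hx' : α * α + X2 = 1) (hy' : β * β + Y2 = 1) (hyz' : β * γ + YZ = 0)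
    (cs1 : YZ * YZ ≤ Y2 * Z2) (cs2 : ZX * ZX ≤ Z2 * X2) (nx : 0 ≤ X2) (nz : 0 ≤ Z2) (ny : 0 ≤ Y2) :
    |4 * R * T| ≤ ((8 * (r - a) / a) * Real.sqrt ((a + d) / (2 * (d - a)))) * N := by
  have hda : 0 < d - a := by linarith
  have hd0 : 0 < d := by linarith
  have hZ0 : 0 ≤ Z := by linarith [mul_self_nonneg γ]
  have hγ : γ^2 ≤ Y2 * Z := by
    have : YZ = -(β*γ) := by linarith
    rw [this] at cs1
    have hb : β*β = 1 - Y2 := by linarith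
    have : Z2 = Z - γ*γ := by linarith
    rw [this] at cs1
    linear_combination cs1 - γ^2 * hb
  have hY2 : (d-a) * Y2 ≤ r - a := by linear_combination hy1 + (d-a) * hy'
  have hX2 : (d-a) * X2 ≤ r - a := by linear_combination hx1 + (d-a) * hx' + hf
  have hγ2 : (d-a) * γ^2 ≤ (r-a) * Z := by
    calc (d-a) * γ^2 ≤ (d-a) * (Y2 * Z) := by gcongr
      _ = ((d-a)*Y2) * Z := by ring
      _ ≤ _ := by gcongr
  have hT2 : (d-a) * T^2 ≤ 4 * (r-a) * Z := by
    have h1 : T^2 ≤ 2 * (γ^2 * α^2) + 2 * ZX^2 := by rw [hT']; linear_combination sq_nonneg (γ*α - ZX)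
    have h2 : γ^2 * α^2 ≤ γ^2 := by linear_combination mul_nonneg (sq_nonneg γ) nx + γ^2 * hx'
    have h3 : ZX^2 ≤ Z * X2 := by
      rw [hZ']
      linear_combination cs2 + mul_nonneg (mul_self_nonneg γ) nx
    have h4 : (d-a) * T^2 ≤ (d-a) * (2 * γ^2 + 2 * (Z * X2)) := by
      gcongr; linarith
    have h5 : (d-a) * X2 * Z ≤ (r-a) * Z := by gcongr
    linear_combination h4 + 2 * hγ2 + 2 * h5
  have hNZ : (a + d) / 2 * Z ≤ N := by
    have := mul_le_mul_of_nonneg_left hr2.le hZ0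
    linear_combination hz1 + hγ2 + this
  have hN0 : 0 ≤ N := le_trans (by positivity) hNZ
  have hR2 : R^2 * a ≤ r * (r - a) * N := by
    have : f * (f - a) / a * N * a = f * (f-a) * N := by field_simp
    have h1 : R^2 * a ≤ f * (f-a) * N := by rw [← this]; gcongr
    refine h1.trans ?_
    have : 0 ≤ f - a := by linarith
    gcongr
    linarith
  have hra : 0 ≤ r - a := by linarith
  have hr0 : 0 < r := by linarith
  have hq : 0 ≤ (a + d) / (2 * (d - a)) := by positivity
  apply abs_le_of_sq_le_sq
  · rw [mul_pow, mul_pow, mul_pow, mul_pow, Real.sq_sqrt hq]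
    have k1 : (R^2 * a) * ((d-a) * T^2) ≤ (r * (r - a) * N) * (4 * (r-a) * Z) := by gcongr
    have k2 : r * Z ≤ N := by
      refine le_trans ?_ hNZ
      gcongr
    have k3 : (r * (r - a) * N) * (4 * (r-a) * Z) ≤ 4 * (r-a)^2 * N^2 := by
      have : 4 * (r-a)^2 * N * (r * Z) ≤ 4 * (r-a)^2 * N * N := by gcongr
      linear_combination this
    have k4 : (8 * (r - a) / a) ^ 2 * ((a + d) / (2 * (d - a))) * N ^ 2 =
        (64 * (r-a)^2 * N^2 * ((a+d)/2)) / (a^2 * (d-a)) := by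
      field_simp
      try ring
    rw [k4, le_div_iff₀ (by positivity)]
    have k5 : 64 * (r-a)^2 * N^2 * a ≤ 64 * (r-a)^2 * N^2 * ((a+d)/2) := by
      gcongr; linarith
    have k6 : a * ((R^2 * a) * ((d-a) * T^2)) ≤ a * (4 * (r-a)^2 * N^2) := by
      exact mul_le_mul_of_nonneg_left (k1.trans k3) hlam0.le
    linear_combination 16 * k6 + k5
  · positivity

lemma aux_core (n : ℕ) (lam x y z : Fin (n+2) → ℝ) (hlam0 : 0 < lam 0) (hlam01 : lam 0 < lam 1)
    (hmono : Monotone lam) (f r : ℝ) (hx : ∑ i, x i * x i = 1) (hfx : ∑ i, lam i * (x i * x i) = f)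
    (hf : f ≤ r) (hy : ∑ i, y i * y i = 1) (hry : ∑ i, lam i * (y i * y i) = r)
    (hyz : ∑ i, y i * z i = 0) (hr2 : r < (lam 0 + lam 1) / 2) :
    |4 * ((∑ i, lam i * (z i * x i)) - f * ∑ i, z i * x i) * (∑ i, z i * x i)| ≤
      ((8 * (r - lam 0) / lam 0) * Real.sqrt ((lam 0 + lam 1) / (2 * (lam 1 - lam 0)))) *
        ∑ i, lam i * (z i * z i) := by
  have s1 : ∀ w : Fin (n+2) → ℝ, lam 1 * (∑ i, w i * w i) - (lam 1 - lam 0) * (w 0 * w 0) ≤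
      ∑ i, lam i * (w i * w i) := by
    intro w
    rw [Fin.sum_univ_succ, Fin.sum_univ_succ (f := fun i => lam i * (w i * w i))]
    have : lam 1 * ∑ i : Fin (n+1), w i.succ * w i.succ ≤
        ∑ i : Fin (n+1), lam i.succ * (w i.succ * w i.succ) := by
      rw [Finset.mul_sum]
      refine Finset.sum_le_sum fun i _ => mul_le_mul_of_nonneg_right (hmono ?_) (mul_self_nonneg _)
      rw [← Fin.succ_zero_eq_one]
      exact Fin.succ_le_succ_iff.mpr (Fin.zero_le _)
    linarith
  have hpos : ∀ i, 0 < lam i := fun i => lt_of_lt_of_le hlam0 (hmono (Fin.zero_le _))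
  have ha0 : ∀ i, lam 0 ≤ lam i := fun i => hmono (Fin.zero_le _)
  have hfa : lam 0 ≤ f := by
    rw [← hfx, ← mul_one (lam 0), ← hx, Finset.mul_sum]
    exact Finset.sum_le_sum fun i _ => mul_le_mul_of_nonneg_right (ha0 i) (mul_self_nonneg _)
  -- residual bound
  have hres : ((∑ i, lam i * (z i * x i)) - f * ∑ i, z i * x i)^2 ≤
      (f * (f - lam 0) / lam 0) * ∑ i, lam i * (z i * z i) := by
    have e1 : ((∑ i, lam i * (z i * x i)) - f * ∑ i, z i * x i) =
        ∑ i, ((lam i - f) * x i / √(lam i)) * (√(lam i) * z i) := by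
      rw [Finset.mul_sum, ← Finset.sum_sub_distrib]
      refine Finset.sum_congr rfl fun i _ => ?_
      have := Real.sqrt_pos.mpr (hpos i)
      field_simp
    have cs := Finset.sum_mul_sq_le_sq_mul_sq Finset.univ
      (fun i => (lam i - f) * x i / √(lam i)) (fun i => √(lam i) * z i)
    rw [e1]
    refine cs.trans ?_
    have e2 : ∑ i, (√(lam i) * z i)^2 = ∑ i, lam i * (z i * z i) := by
      refine Finset.sum_congr rfl fun i _ => ?_
      rw [mul_pow, Real.sq_sqrt (hpos i).le]; ring
    rw [e2]
    refine mul_le_mul_of_nonneg_right ?_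
      (Finset.sum_nonneg fun i _ => mul_nonneg (hpos i).le (mul_self_nonneg _))
    have e4 : f * (f - lam 0) / lam 0 = ∑ i, ((f / lam 0) * ((lam i - lam 0) * (x i * x i))
         + (1 - f / lam 0) * (lam i * (x i * x i) - f * (x i * x i))) := by
      have : ∀ i, ((f / lam 0) * ((lam i - lam 0) * (x i * x i))
         + (1 - f / lam 0) * (lam i * (x i * x i) - f * (x i * x i))) =
         ((f / lam 0) * (lam i * (x i * x i) - lam 0 * (x i * x i))
         + (1 - f / lam 0) * (lam i * (x i * x i) - f * (x i * x i))) := fun i => by ring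
      simp only [this, Finset.sum_add_distrib, Finset.sum_sub_distrib, ← Finset.mul_sum, hx, hfx]
      field_simp
      ring
    rw [e4]
    refine Finset.sum_le_sum fun i _ => ?_
    rw [div_pow, Real.sq_sqrt (hpos i).le, div_le_iff₀ (hpos i)]
    have : (f / lam 0 * ((lam i - lam 0) * (x i * x i)) + (1 - f / lam 0) * (lam i * (x i * x i) - f * (x i * x i))) * lam i
       - ((lam i - f) * x i)^2 = (f / lam 0) * (f * ((lam i - lam 0) * x i ^2)) := by
      field_simp
      ring
    have h2 : 0 ≤ (f / lam 0) * (f * ((lam i - lam 0) * x i ^2)) := by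
      have := ha0 i
      have : 0 ≤ lam i - lam 0 := by linarith
      have : 0 < f := by linarith
      positivity
    linarith
  set Z := ∑ i, z i * z i with hZ
  set N := ∑ i, lam i * (z i * z i) with hN
  set R := (∑ i, lam i * (z i * x i)) - f * ∑ i, z i * x i with hR
  set T := ∑ i, z i * x i with hT
  have hx1 := s1 x
  have hy1 := s1 y
  have hz1 := s1 z
  rw [hx, hfx] at hx1
  rw [hy, hry] at hy1
  rw [← hZ, ← hN] at hz1
  have hZ' : Z = z 0 * z 0 + ∑ i : Fin (n+1), z i.succ * z i.succ := by rw [hZ, Fin.sum_univ_succ]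
  have hT' : T = z 0 * x 0 + ∑ i : Fin (n+1), z i.succ * x i.succ := by rw [hT, Fin.sum_univ_succ]
  have hx' := hx
  have hy' := hy
  have hyz' := hyz
  rw [Fin.sum_univ_succ] at hx' hy' hyz'
  have cs1 := Finset.sum_mul_sq_le_sq_mul_sq Finset.univ
      (fun i : Fin (n+1) => y i.succ) (fun i => z i.succ)
  have cs2 := Finset.sum_mul_sq_le_sq_mul_sq Finset.univ
      (fun i : Fin (n+1) => z i.succ) (fun i => x i.succ)
  simp only [pow_two (_ : ℝ)] at cs1 cs2
  have nx : 0 ≤ ∑ i : Fin (n+1), x i.succ * x i.succ := Finset.sum_nonneg fun i _ => mul_self_nonneg _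
  have nz : 0 ≤ ∑ i : Fin (n+1), z i.succ * z i.succ := Finset.sum_nonneg fun i _ => mul_self_nonneg _
  have ny : 0 ≤ ∑ i : Fin (n+1), y i.succ * y i.succ := Finset.sum_nonneg fun i _ => mul_self_nonneg _
  exact aux_scalar (lam 0) (lam 1) f r (x 0) (y 0) (z 0) _ _ _ _ _ Z N R T hlam0 hlam01 hr2 hf hfa hres
    hx1 hy1 hz1 hZ' hT' hx' hy' hyz' cs1 cs2 nx nz ny

lemma aux_expand (N : ℕ) (M : Matrix (Fin N) (Fin N) ℝ) (u : Fin N → Fin N → ℝ)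
    (horth : ∀ i j, u i ⬝ᵥ (M *ᵥ u j) = if i = j then (1:ℝ) else 0) (w : Fin N → ℝ) :
    w = ∑ i, (u i ⬝ᵥ (M *ᵥ w)) • u i := by
  have h1 : (Matrix.of u * M) * (Matrix.of u)ᵀ = 1 := by
    ext i j
    rw [Matrix.mul_assoc, Matrix.one_apply, ← horth i j]
    rfl
  have h2 := mul_eq_one_comm.mp h1
  have h3 : w = (Matrix.of u)ᵀ *ᵥ (Matrix.of u *ᵥ (M *ᵥ w)) := by
    rw [Matrix.mulVec_mulVec, Matrix.mulVec_mulVec, Matrix.mul_assoc, h2, Matrix.one_mulVec]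
  ext k
  conv_lhs => rw [h3]
  simp [Matrix.mulVec, dotProduct, Finset.sum_apply, mul_comm]

lemma aux_gram (N : ℕ) (C : Matrix (Fin N) (Fin N) ℝ) (M : Matrix (Fin N) (Fin N) ℝ)
    (hM : Mᵀ = M) (u : Fin N → Fin N → ℝ) (lam : Fin N → ℝ)
    (heig : ∀ i, C *ᵥ u i = lam i • (M *ᵥ u i))
    (horth : ∀ i j, u i ⬝ᵥ (M *ᵥ u j) = if i = j then (1:ℝ) else 0) (w v : Fin N → ℝ) :
    w ⬝ᵥ (C *ᵥ v) = ∑ i, lam i * ((u i ⬝ᵥ (M *ᵥ w)) * (u i ⬝ᵥ (M *ᵥ v))) := by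
  conv_lhs => rw [aux_expand N M u horth v]
  rw [Matrix.mulVec_sum, dotProduct_sum]
  refine Finset.sum_congr rfl fun i _ => ?_
  rw [Matrix.mulVec_smul, heig, dotProduct_smul, dotProduct_smul]
  have : w ⬝ᵥ M *ᵥ u i = u i ⬝ᵥ M *ᵥ w := by
    rw [Matrix.dotProduct_mulVec, ← Matrix.mulVec_transpose, hM, dotProduct_comm]
  rw [this]
  simp only [smul_eq_mul]
  ring

lemma aux_psd_s9 (m : ℕ) (B : Matrix (Fin m) (Fin m) ℝ) (hB : Bᵀ = B) (g y : Fin m → ℝ) (c : ℝ)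
    (h : ∀ v : Fin m → ℝ, |2 * (g ⬝ᵥ v) * (y ⬝ᵥ v)| ≤ c * (v ⬝ᵥ (B *ᵥ v))) :
    ((vecMulVec g y + vecMulVec y g) - (-c) • B).PosSemidef ∧
      (c • B - (vecMulVec g y + vecMulVec y g)).PosSemidef := by
  have hq : ∀ v : Fin m → ℝ, v ⬝ᵥ ((vecMulVec g y + vecMulVec y g) *ᵥ v) =
      2 * (g ⬝ᵥ v) * (y ⬝ᵥ v) := by
    intro v
    rw [Matrix.add_mulVec, Matrix.vecMulVec_mulVec, Matrix.vecMulVec_mulVec, dotProduct_add,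
      dotProduct_comm g v, dotProduct_comm y v]
    simp [dotProduct_comm]
    ring
  have hS : (vecMulVec g y + vecMulVec y g)ᵀ = vecMulVec g y + vecMulVec y g := by
    rw [Matrix.transpose_add, Matrix.transpose_vecMulVec, Matrix.transpose_vecMulVec, add_comm]
  constructor
  · refine Matrix.PosSemidef.of_dotProduct_mulVec_nonneg ?_ fun v => ?_
    · rw [Matrix.IsHermitian, Matrix.conjTranspose_eq_transpose_of_trivial, Matrix.transpose_sub, hS,
        Matrix.transpose_smul, hB]
    · rw [star_trivial, Matrix.sub_mulVec, dotProduct_sub, hq, Matrix.smul_mulVec, dotProduct_smul,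
        smul_eq_mul]
      have := (abs_le.mp (h v)).1
      linarith
  · refine Matrix.PosSemidef.of_dotProduct_mulVec_nonneg ?_ fun v => ?_
    · rw [Matrix.IsHermitian, Matrix.conjTranspose_eq_transpose_of_trivial, Matrix.transpose_sub, hS,
        Matrix.transpose_smul, hB]
    · rw [star_trivial, Matrix.sub_mulVec, dotProduct_sub, hq, Matrix.smul_mulVec, dotProduct_smul,
        smul_eq_mul]
      have := (abs_le.mp (h v)).2
      linarith

/-- Under λ₁ ≤ ρ_q < (λ₁+λ₂)/2, for any y ∈ Y:
−χ_g B ⪯ ∇φ(y)yᵀ + y(∇φ(y))ᵀ ⪯ χ_g B,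
where χ_g = (8(ρ_q−λ₁)/λ₁)·((λ₁+λ₂)/(2(λ₂−λ₁)))^{1/2}. -/
theorem stmt_9 (n : ℕ)
    (A M : Matrix (Fin (n+2)) (Fin (n+2)) ℝ)
    (hA : A.PosDef) (hM : M.PosDef)
    (q : Fin (n+2) → ℝ) (Q : Matrix (Fin (n+2)) (Fin (n+1)) ℝ)
    (hq1 : q ⬝ᵥ (M *ᵥ q) = 1)
    (hQMQ : Qᵀ * M * Q = 1)
    (hQMq : (Qᵀ * M) *ᵥ q = 0)
    (lam : Fin (n+2) → ℝ) (u : Fin (n+2) → Fin (n+2) → ℝ)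
    (hlam0 : 0 < lam 0) (hlam01 : lam 0 < lam 1) (hmono : Monotone lam)
    (heig : ∀ i, A *ᵥ u i = lam i • (M *ᵥ u i))
    (horth : ∀ i j, u i ⬝ᵥ (M *ᵥ u j) = if i = j then (1:ℝ) else 0)
    (hqu1 : 0 < q ⬝ᵥ (M *ᵥ u 0))
    (B : Matrix (Fin (n+1)) (Fin (n+1)) ℝ) (hB : B = Qᵀ * A * Q)
    (b : Fin (n+1) → ℝ) (hb : b = (Qᵀ * A) *ᵥ q)
    (ρq : ℝ) (hρq : ρq = Rq A M q)
    (hρ1 : lam 0 ≤ ρq) (hρ2 : ρq < (lam 0 + lam 1) / 2)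
    (χg : ℝ)
    (hχg : χg = (8 * (ρq - lam 0) / lam 0) *
      Real.sqrt ((lam 0 + lam 1) / (2 * (lam 1 - lam 0)))) :
    ∀ y ∈ psiMap M q Q '' (Xset A M q),
      ((vecMulVec (gradPhi B b ρq y) y + vecMulVec y (gradPhi B b ρq y)) -
        (-χg) • B).PosSemidef ∧
      (χg • B -
        (vecMulVec (gradPhi B b ρq y) y + vecMulVec y (gradPhi B b ρq y))).PosSemidef := by
  rintro y ⟨x, ⟨⟨hx1, hx2⟩, hx3⟩, rfl⟩
  have hMt : Mᵀ = M := by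
    have := hM.isHermitian
    rwa [Matrix.IsHermitian, Matrix.conjTranspose_eq_transpose_of_trivial] at this
  have hAt : Aᵀ = A := by
    have := hA.isHermitian
    rwa [Matrix.IsHermitian, Matrix.conjTranspose_eq_transpose_of_trivial] at this
  have hBt : Bᵀ = B := by
    rw [hB, Matrix.transpose_mul, Matrix.transpose_mul, hAt, Matrix.transpose_transpose,
      Matrix.mul_assoc]
  have hxx : x ⬝ᵥ (M *ᵥ x) = 1 := by
    have := hx1
    rw [Mnorm, Real.sqrt_eq_one] at this
    exact this
  have symM : ∀ v w : Fin (n+2) → ℝ, v ⬝ᵥ (M *ᵥ w) = w ⬝ᵥ (M *ᵥ v) := by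
    intro v w
    rw [Matrix.dotProduct_mulVec, ← Matrix.mulVec_transpose, hMt, dotProduct_comm]
  have adj : ∀ (w : Fin (n+2) → ℝ) (v : Fin (n+1) → ℝ), (Qᵀ *ᵥ w) ⬝ᵥ v = w ⬝ᵥ (Q *ᵥ v) := by
    intro w v
    rw [Matrix.dotProduct_mulVec, ← Matrix.mulVec_transpose]
  -- completeness of [q, Q]
  have hexp : x = (q ⬝ᵥ (M *ᵥ x)) • q + Q *ᵥ ((Qᵀ * M) *ᵥ x) := by
    have hQj : ∀ j (w : Fin (n+2) → ℝ), Qᵀ j ⬝ᵥ (M *ᵥ w) = ((Qᵀ * M) *ᵥ w) j := by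
      intro j w
      rw [← Matrix.mulVec_mulVec]; rfl
    have := aux_expand (n+2) M (Fin.cons q (fun j => Qᵀ j)) (by
      intro i j
      refine Fin.cases ?_ (fun i => ?_) i <;> refine Fin.cases ?_ (fun j => ?_) j
      · simpa using hq1
      · simp only [Fin.cons_zero, Fin.cons_succ]
        rw [symM, hQj, hQMq, if_neg (Fin.succ_ne_zero j).symm]; rfl
      · simp only [Fin.cons_zero, Fin.cons_succ]
        rw [hQj, hQMq, if_neg (Fin.succ_ne_zero i)]; rfl
      · simp only [Fin.cons_succ, Fin.succ_inj]
        rw [← Matrix.one_apply, ← hQMQ, hQj]; rfl) x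
    rw [Fin.sum_univ_succ] at this
    simp only [Fin.cons_zero, Fin.cons_succ, hQj] at this
    conv_lhs => rw [this]
    congr 1
    ext k
    simp [Matrix.mulVec, dotProduct, mul_comm]
  set c := q ⬝ᵥ (M *ᵥ x) with hc
  set y := psiMap M q Q x with hy
  have hyc : c • y = (Qᵀ * M) *ᵥ x := by
    rw [hy, psiMap, ← hc, smul_smul, mul_inv_cancel₀ hx2.ne', one_smul]
  have hxw : x = c • (q + Q *ᵥ y) := by
    rw [smul_add, ← Matrix.mulVec_smul, hyc]; exact hexp
  have hQQ : Qᵀ *ᵥ (M *ᵥ (Q *ᵥ y)) = y := by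
    rw [Matrix.mulVec_mulVec, Matrix.mulVec_mulVec, hQMQ, Matrix.one_mulVec]
  have hQq0 : Qᵀ *ᵥ (M *ᵥ q) = 0 := by rw [Matrix.mulVec_mulVec]; exact hQMq
  have hqMQ : q ⬝ᵥ (M *ᵥ (Q *ᵥ y)) = 0 := by
    rw [symM, dotProduct_comm, ← adj, hQq0, zero_dotProduct]
  set w := q + Q *ᵥ y with hw
  have hww : w ⬝ᵥ (M *ᵥ w) = y ⬝ᵥ y + 1 := by
    rw [hw, Matrix.mulVec_add, add_dotProduct, dotProduct_add, dotProduct_add, hq1, hqMQ,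
      symM (Q *ᵥ y) q, hqMQ, dotProduct_comm (Q *ᵥ y), ← adj, hQQ]
    ring
  have hAqq : q ⬝ᵥ (A *ᵥ q) = ρq := by rw [hρq, Rq, hq1, div_one]
  have hwA : Qᵀ *ᵥ (A *ᵥ w) = B *ᵥ y + b := by
    rw [hw, hB, hb, Matrix.mulVec_add, Matrix.mulVec_add, add_comm (Qᵀ *ᵥ (A *ᵥ q))]
    simp only [Matrix.mulVec_mulVec, Matrix.mul_assoc]
  have hwAw : w ⬝ᵥ (A *ᵥ w) = y ⬝ᵥ (B *ᵥ y) + 2 * (y ⬝ᵥ b) + ρq := by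
    have h1 : (Q *ᵥ y) ⬝ᵥ (A *ᵥ w) = y ⬝ᵥ (B *ᵥ y) + y ⬝ᵥ b := by
      rw [dotProduct_comm, ← adj, hwA, dotProduct_comm, dotProduct_add]
    have h2 : q ⬝ᵥ (A *ᵥ (Q *ᵥ y)) = y ⬝ᵥ b := by
      rw [Matrix.dotProduct_mulVec, ← Matrix.mulVec_transpose, hAt, ← adj, Matrix.mulVec_mulVec, ← hb,
        dotProduct_comm]
    have h3 : w ⬝ᵥ (A *ᵥ w) = q ⬝ᵥ (A *ᵥ w) + (Q *ᵥ y) ⬝ᵥ (A *ᵥ w) := by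
      conv_lhs => rw [hw, add_dotProduct]
    have h4 : q ⬝ᵥ (A *ᵥ w) = ρq + y ⬝ᵥ b := by
      rw [hw, Matrix.mulVec_add, dotProduct_add, hAqq, h2]
    rw [h3, h4, h1]; ring
  have hcW : c^2 * (y ⬝ᵥ y + 1) = 1 := by
    rw [← hww, ← hxx, hxw]
    simp only [Matrix.mulVec_smul, dotProduct_smul, smul_dotProduct, smul_eq_mul]; ring
  have hW0 : y ⬝ᵥ y + 1 ≠ 0 := by
    intro h; rw [h] at hcW; simp at hcW
  have hphi : phiAux B b ρq y = x ⬝ᵥ (A *ᵥ x) := by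
    rw [phiAux, ← hwAw, div_eq_iff hW0, hxw]
    simp only [Matrix.mulVec_smul, dotProduct_smul, smul_dotProduct, smul_eq_mul]
    linear_combination (-(w ⬝ᵥ (A *ᵥ w))) * hcW
  have hMu : ∀ v w : Fin (n+2) → ℝ, v ⬝ᵥ (M *ᵥ w) =
      ∑ i, (u i ⬝ᵥ (M *ᵥ v)) * (u i ⬝ᵥ (M *ᵥ w)) := by
    intro v w
    have := aux_gram (n+2) M M hMt u (fun _ => 1) (by simp) horth v w
    simpa using this
  have hAu := aux_gram (n+2) A M hMt u lam heig horth
  refine aux_psd_s9 _ B hBt _ y χg fun v => ?_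
  have hz0 : q ⬝ᵥ (M *ᵥ (Q *ᵥ v)) = 0 := by
    rw [symM, dotProduct_comm, ← adj, hQq0, zero_dotProduct]
  have hBv : v ⬝ᵥ (B *ᵥ v) = (Q *ᵥ v) ⬝ᵥ (A *ᵥ (Q *ᵥ v)) := by
    rw [dotProduct_comm (Q *ᵥ v), ← adj, hB, dotProduct_comm]
    simp only [Matrix.mulVec_mulVec, Matrix.mul_assoc]
  have hwM : Qᵀ *ᵥ (M *ᵥ w) = y := by
    rw [hw, Matrix.mulVec_add, Matrix.mulVec_add, hQq0, hQQ, zero_add]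
  have hyv : c * (y ⬝ᵥ v) = (Q *ᵥ v) ⬝ᵥ (M *ᵥ x) := by
    rw [dotProduct_comm (Q *ᵥ v), ← adj, hxw]
    simp only [Matrix.mulVec_smul, smul_dotProduct, smul_eq_mul, hwM]
  have hbv : c * ((B *ᵥ y + b) ⬝ᵥ v) = (Q *ᵥ v) ⬝ᵥ (A *ᵥ x) := by
    rw [dotProduct_comm (Q *ᵥ v), ← adj, hxw]
    simp only [Matrix.mulVec_smul, smul_dotProduct, smul_eq_mul, hwA]
  have hgv : 2 * (gradPhi B b ρq y ⬝ᵥ v) * (y ⬝ᵥ v) =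
      4 * ((Q *ᵥ v) ⬝ᵥ (A *ᵥ x) - (x ⬝ᵥ (A *ᵥ x)) * ((Q *ᵥ v) ⬝ᵥ (M *ᵥ x))) *
        ((Q *ᵥ v) ⬝ᵥ (M *ᵥ x)) := by
    rw [← hyv, ← hbv, gradPhi, hphi, smul_dotProduct, add_dotProduct, sub_dotProduct,
      smul_dotProduct, add_dotProduct]
    simp only [smul_eq_mul]
    have : 2 / (y ⬝ᵥ y + 1) = 2 * c^2 := by
      rw [div_eq_iff hW0]; linear_combination (-2) * hcW
    rw [this]; ring
  rw [hgv, hBv, hχg]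
  have hf : x ⬝ᵥ (A *ᵥ x) ≤ ρq := by
    rw [hρq]; simpa [Rq, hxx] using hx3
  have := aux_core n lam (fun i => u i ⬝ᵥ (M *ᵥ x)) (fun i => u i ⬝ᵥ (M *ᵥ q))
    (fun i => u i ⬝ᵥ (M *ᵥ (Q *ᵥ v))) hlam0 hlam01 hmono (x ⬝ᵥ (A *ᵥ x)) ρq
    (by rw [← hMu, hxx]) (by rw [← hAu]) hf (by rw [← hMu, hq1]) (by rw [← hAu, hAqq])
    (by rw [← hMu, hz0]) hρ2
  simp only [← hAu, ← hMu] at this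
  exact this
end

section
/- Suppose λ₁ ≤ ρ_q ≤ λ₁ + (λ₂−λ₁)/(2+χ_P). Then: (1) Y is a convex set; (2) the minimization problem min_{y ∈ Y} φ(y) has a unique solution y*, namely y* = ψ(u₁), with minimum value φ(y*) = λ₁; and (3) the eigenvector u₁ is recovered as u₁ = ψ†(y*). -/
open Matrix

lemma symm_dot {m : ℕ} {M : Matrix (Fin m) (Fin m) ℝ} (hM : M.PosDef) (x y : Fin m → ℝ) :
    x ⬝ᵥ (M *ᵥ y) = y ⬝ᵥ (M *ᵥ x) := by
  have h : Mᵀ = M := by simpa using hM.isHermitian.eq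
  rw [Matrix.dotProduct_mulVec, ← Matrix.mulVec_transpose, h, dotProduct_comm]

lemma dot_pos' {m : ℕ} {M : Matrix (Fin m) (Fin m) ℝ} (hM : M.PosDef) {x : Fin m → ℝ}
    (hx : x ≠ 0) : 0 < x ⬝ᵥ (M *ᵥ x) := by
  simpa using hM.dotProduct_mulVec_pos hx

lemma dot_nonneg' {m : ℕ} {M : Matrix (Fin m) (Fin m) ℝ} (hM : M.PosDef) (x : Fin m → ℝ) :
    0 ≤ x ⬝ᵥ (M *ᵥ x) := by
  by_cases h : x = 0
  · simp [h]
  · exact (dot_pos' hM h).le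

lemma expand_basis {m : ℕ} {M : Matrix (Fin m) (Fin m) ℝ} (u : Fin m → Fin m → ℝ)
    (horth : ∀ i j, u i ⬝ᵥ (M *ᵥ u j) = if i = j then (1:ℝ) else 0) (x : Fin m → ℝ) :
    x = ∑ i, (u i ⬝ᵥ (M *ᵥ x)) • u i := by
  have h1 : (Matrix.of u * M) * (Matrix.of u)ᵀ = 1 := by
    ext i j
    rw [Matrix.mul_assoc, Matrix.one_apply, ← horth i j]
    rfl
  have h2 := mul_eq_one_comm.mp h1
  have h3 : (Matrix.of u)ᵀ *ᵥ (Matrix.of u *ᵥ (M *ᵥ x)) = x := by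
    rw [Matrix.mulVec_mulVec, Matrix.mulVec_mulVec, Matrix.mul_assoc, h2, Matrix.one_mulVec]
  conv_lhs => rw [← h3]
  ext j
  simp only [Matrix.mulVec, dotProduct, Matrix.transpose_apply, Matrix.of_apply, Finset.sum_apply,
    Pi.smul_apply, smul_eq_mul]
  exact Finset.sum_congr rfl fun i _ => mul_comm _ _

lemma gap_bound {n : ℕ} {A M : Matrix (Fin (n+2)) (Fin (n+2)) ℝ}
    (hA : A.PosDef) (hM : M.PosDef)
    (lam : Fin (n+2) → ℝ) (u : Fin (n+2) → Fin (n+2) → ℝ) (hmono : Monotone lam)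
    (heig : ∀ i, A *ᵥ u i = lam i • (M *ᵥ u i))
    (horth : ∀ i j, u i ⬝ᵥ (M *ᵥ u j) = if i = j then (1:ℝ) else 0) (x : Fin (n+2) → ℝ) :
    lam 1 * (x ⬝ᵥ (M *ᵥ x)) - (lam 1 - lam 0) * (u 0 ⬝ᵥ (M *ᵥ x))^2 ≤ x ⬝ᵥ (A *ᵥ x) := by
  have key : ∀ y, x ⬝ᵥ y = ∑ i, (u i ⬝ᵥ (M *ᵥ x)) * (u i ⬝ᵥ y) := by
    intro y
    conv_lhs => rw [expand_basis u horth x]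
    simp [sum_dotProduct, smul_dotProduct]
  have hAi : ∀ i, u i ⬝ᵥ (A *ᵥ x) = lam i * (u i ⬝ᵥ (M *ᵥ x)) := by
    intro i
    rw [symm_dot hA, heig, dotProduct_smul, symm_dot hM, smul_eq_mul]
  rw [key (M *ᵥ x), key (A *ᵥ x)]
  simp only [hAi]
  rw [Fin.sum_univ_succ, Fin.sum_univ_succ (n := n+1), mul_add, Finset.mul_sum]
  have : ∑ i : Fin (n+1), lam 1 * (u i.succ ⬝ᵥ (M *ᵥ x) * (u i.succ ⬝ᵥ (M *ᵥ x))) ≤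
     ∑ i : Fin (n+1), u i.succ ⬝ᵥ (M *ᵥ x) * (lam i.succ * (u i.succ ⬝ᵥ (M *ᵥ x))) := by
    refine Finset.sum_le_sum fun i _ => ?_
    have : lam 1 ≤ lam i.succ := hmono (by rw [Fin.le_def]; simp)
    nlinarith [mul_self_nonneg (u i.succ ⬝ᵥ (M *ᵥ x))]
  nlinarith

/-- Under λ₁ ≤ ρ_q ≤ λ₁ + (λ₂−λ₁)/(2+χ_P): (1) Y is convex; (2) min_{y∈Y} φ has
unique solution y* = ψ(u₁) with φ(y*) = λ₁; (3) u₁ = ψ†(y*). -/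
theorem stmt_11 (n : ℕ)
    (A M : Matrix (Fin (n+2)) (Fin (n+2)) ℝ)
    (hA : A.PosDef) (hM : M.PosDef)
    (q : Fin (n+2) → ℝ) (Q : Matrix (Fin (n+2)) (Fin (n+1)) ℝ)
    (hq1 : q ⬝ᵥ (M *ᵥ q) = 1)
    (hQMQ : Qᵀ * M * Q = 1)
    (hQMq : (Qᵀ * M) *ᵥ q = 0)
    (lam : Fin (n+2) → ℝ) (u : Fin (n+2) → Fin (n+2) → ℝ)
    (hlam0 : 0 < lam 0) (hlam01 : lam 0 < lam 1) (hmono : Monotone lam)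
    (heig : ∀ i, A *ᵥ u i = lam i • (M *ᵥ u i))
    (horth : ∀ i j, u i ⬝ᵥ (M *ᵥ u j) = if i = j then (1:ℝ) else 0)
    (hqu1 : 0 < q ⬝ᵥ (M *ᵥ u 0))
    (B : Matrix (Fin (n+1)) (Fin (n+1)) ℝ) (hB : B = Qᵀ * A * Q)
    (b : Fin (n+1) → ℝ) (hb : b = (Qᵀ * A) *ᵥ q)
    (ρq : ℝ) (hρq : ρq = Rq A M q)
    (P : Matrix (Fin (n+1)) (Fin (n+1)) ℝ) (hP : P.PosDef)
    (ximin ximax : ℝ)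
    (hximin : IsLeast {ξ : ℝ | ∃ v : Fin (n+1) → ℝ, v ≠ 0 ∧ B *ᵥ v = ξ • (P *ᵥ v)} ximin)
    (hximax : IsGreatest {ξ : ℝ | ∃ v : Fin (n+1) → ℝ, v ≠ 0 ∧ B *ᵥ v = ξ • (P *ᵥ v)} ximax)
    (χP : ℝ)
    (hχP : χP = (8 * lam 1 / lam 0) * (ximax / ximin) *
      Real.sqrt ((lam 1 + lam 0) / (2 * (lam 1 - lam 0))))
    (hρ1 : lam 0 ≤ ρq) (hρ2 : ρq ≤ lam 0 + (lam 1 - lam 0) / (2 + χP))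
    (ystar : Fin (n+1) → ℝ) (hystar : ystar = psiMap M q Q (u 0)) :
    Convex ℝ (psiMap M q Q '' (Xset A M q)) ∧
    ystar ∈ psiMap M q Q '' (Xset A M q) ∧
    (∀ y ∈ psiMap M q Q '' (Xset A M q), phiAux B b ρq ystar ≤ phiAux B b ρq y) ∧
    (∀ y ∈ psiMap M q Q '' (Xset A M q),
      (∀ y' ∈ psiMap M q Q '' (Xset A M q), phiAux B b ρq y ≤ phiAux B b ρq y') →
        y = ystar) ∧
    phiAux B b ρq ystar = lam 0 ∧
    u 0 = psiDag M q Q ystar := by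
  classical
  have hAs := symm_dot hA
  have hMs := symm_dot hM
  have gap := gap_bound hA hM lam u hmono heig horth
  have hu00 : u 0 ⬝ᵥ (M *ᵥ u 0) = 1 := by simp [horth]
  have hρ : ρq = q ⬝ᵥ (A *ᵥ q) := by rw [hρq, Rq, hq1, div_one]
  -- residual formula
  have hres : ∀ x, (x - (u 0 ⬝ᵥ (M *ᵥ x)) • u 0) ⬝ᵥ (M *ᵥ (x - (u 0 ⬝ᵥ (M *ᵥ x)) • u 0))
      = x ⬝ᵥ (M *ᵥ x) - (u 0 ⬝ᵥ (M *ᵥ x))^2 := by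
    intro x
    simp only [Matrix.mulVec_sub, Matrix.mulVec_smul, dotProduct_sub, sub_dotProduct,
      smul_dotProduct, dotProduct_smul, smul_eq_mul, hu00, hMs x (u 0)]
    ring
  -- Q facts
  have hqQ : ∀ y, q ⬝ᵥ (M *ᵥ (Q *ᵥ y)) = 0 := by
    intro y
    rw [hMs, dotProduct_comm, Matrix.dotProduct_mulVec, ← Matrix.mulVec_transpose,
      Matrix.mulVec_mulVec, hQMq, zero_dotProduct]
  have hQQ : ∀ y, (Q *ᵥ y) ⬝ᵥ (M *ᵥ (Q *ᵥ y)) = y ⬝ᵥ y := by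
    intro y
    rw [dotProduct_comm, Matrix.dotProduct_mulVec, ← Matrix.mulVec_transpose,
      Matrix.mulVec_mulVec, Matrix.mulVec_mulVec, hQMQ, Matrix.one_mulVec]
  have hBB : ∀ y, (Q *ᵥ y) ⬝ᵥ (A *ᵥ (Q *ᵥ y)) = y ⬝ᵥ (B *ᵥ y) := by
    intro y
    rw [dotProduct_comm, Matrix.dotProduct_mulVec, ← Matrix.mulVec_transpose,
      Matrix.mulVec_mulVec, Matrix.mulVec_mulVec, ← hB, dotProduct_comm]
  have hbb : ∀ y, (Q *ᵥ y) ⬝ᵥ (A *ᵥ q) = y ⬝ᵥ b := by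
    intro y
    rw [dotProduct_comm, Matrix.dotProduct_mulVec, ← Matrix.mulVec_transpose,
      Matrix.mulVec_mulVec, ← hb, dotProduct_comm]
  have hxM : ∀ y, (Q *ᵥ y + q) ⬝ᵥ (M *ᵥ (Q *ᵥ y + q)) = y ⬝ᵥ y + 1 := by
    intro y
    simp only [Matrix.mulVec_add, dotProduct_add, add_dotProduct, hqQ, hQQ, hq1,
      hMs (Q *ᵥ y) q]
    ring
  have hxA : ∀ y, (Q *ᵥ y + q) ⬝ᵥ (A *ᵥ (Q *ᵥ y + q)) = y ⬝ᵥ (B *ᵥ y) + 2 * (y ⬝ᵥ b) + ρq := by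
    intro y
    simp only [Matrix.mulVec_add, dotProduct_add, add_dotProduct, hBB, hbb, hρ,
      hAs q (Q *ᵥ y)]
    ring
  have hxq : ∀ y, q ⬝ᵥ (M *ᵥ (Q *ᵥ y + q)) = 1 := by
    intro y
    simp only [Matrix.mulVec_add, dotProduct_add, hqQ, hq1, zero_add]
  have hyy : ∀ y : Fin (n+1) → ℝ, 0 ≤ y ⬝ᵥ y := fun y => by
    rw [← hQQ]; exact dot_nonneg' hM _
  have hphi : ∀ y, phiAux B b ρq y = Rq A M (Q *ᵥ y + q) := by
    intro y
    rw [phiAux, Rq, hxM, hxA]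
  have hRsc : ∀ (c : ℝ) x, c ≠ 0 → Rq A M (c • x) = Rq A M x := by
    intro c x hc
    simp only [Rq, Matrix.mulVec_smul, dotProduct_smul, smul_dotProduct, smul_eq_mul]
    rw [mul_div_mul_left _ _ hc, mul_div_mul_left _ _ hc]
  have hpsc : ∀ (c : ℝ) x, c ≠ 0 → psiMap M q Q (c • x) = psiMap M q Q x := by
    intro c x hc
    simp only [psiMap, Matrix.mulVec_smul, dotProduct_smul, smul_eq_mul, smul_smul]
    congr 1
    by_cases h : q ⬝ᵥ (M *ᵥ x) = 0
    · simp [h]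
    · field_simp
  have hpx : ∀ y, psiMap M q Q (Q *ᵥ y + q) = y := by
    intro y
    rw [psiMap, hxq, Matrix.mulVec_add, hQMq, Matrix.mulVec_mulVec, hQMQ]
    simp
  -- completeness
  have hcomp : ∀ x, Q *ᵥ ((Qᵀ * M) *ᵥ x) + (q ⬝ᵥ (M *ᵥ x)) • q = x := by
    intro x
    obtain ⟨v, hv0, hvs⟩ : ∃ v : Fin (n+2) → Fin (n+2) → ℝ, v 0 = q ∧
        ∀ j : Fin (n+1), v j.succ = fun k => Q k j :=
      ⟨Fin.cons q (fun j k => Q k j), rfl, fun j => rfl⟩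
    have hv : ∀ i j, v i ⬝ᵥ (M *ᵥ v j) = if i = j then (1:ℝ) else 0 := by
      have hcol : ∀ j : Fin (n+1), v j.succ = Q *ᵥ (Pi.single j 1) := by
        intro j; rw [hvs]; ext k; simp
      intro i j
      refine Fin.cases ?_ (fun i => ?_) i <;> refine Fin.cases ?_ (fun j => ?_) j
      · simp [hv0, hq1]
      · rw [hv0, hcol, hqQ]; simp [(Fin.succ_ne_zero j).symm]
      · rw [hv0, hcol, hMs, hqQ]; simp
      · simp only [hvs, Fin.succ_inj]
        rw [← Matrix.one_apply, ← hQMQ, Matrix.mul_assoc]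
        rfl
    have := expand_basis _ hv x
    rw [Fin.sum_univ_succ] at this
    refine Eq.trans ?_ this.symm
    simp only [hv0, hvs]
    refine (add_comm _ _).trans ?_
    congr 1
    ext k
    rw [← Matrix.mulVec_mulVec]
    simp only [Matrix.mulVec, dotProduct, Matrix.transpose_apply, Finset.sum_apply,
      Pi.smul_apply, smul_eq_mul]
    exact Finset.sum_congr rfl fun i _ => mul_comm _ _
  have hback : ∀ x, q ⬝ᵥ (M *ᵥ x) ≠ 0 →
      Q *ᵥ (psiMap M q Q x) + q = (q ⬝ᵥ (M *ᵥ x))⁻¹ • x := by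
    intro x hx
    refine Eq.trans ?_ (congrArg (fun z => (q ⬝ᵥ (M *ᵥ x))⁻¹ • z) (hcomp x))
    beta_reduce
    rw [psiMap, Matrix.mulVec_smul, smul_add, smul_smul _ _ q, inv_mul_cancel₀ hx, one_smul]
  -- description of Y
  have hY : ∀ y, y ∈ psiMap M q Q '' (Xset A M q) ↔
      y ⬝ᵥ (B *ᵥ y) + 2 * (y ⬝ᵥ b) - ρq * (y ⬝ᵥ y) ≤ 0 := by
    intro y
    have h1 : Rq A M (Q *ᵥ y + q) ≤ ρq ↔
        y ⬝ᵥ (B *ᵥ y) + 2 * (y ⬝ᵥ b) - ρq * (y ⬝ᵥ y) ≤ 0 := by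
      rw [Rq, hxM, hxA, div_le_iff₀ (by linarith [hyy y])]
      constructor <;> intro h <;> linarith
    rw [← h1]
    constructor
    · rintro ⟨x, ⟨⟨_, hx⟩, hR⟩, rfl⟩
      rw [hback x hx.ne', hRsc _ _ (inv_ne_zero hx.ne'), hρq]
      exact hR
    · intro h
      have hpos : 0 < (Q *ᵥ y + q) ⬝ᵥ (M *ᵥ (Q *ᵥ y + q)) := by rw [hxM]; linarith [hyy y]
      have hn : 0 < Mnorm M (Q *ᵥ y + q) := Real.sqrt_pos.mpr hpos
      refine ⟨(Mnorm M (Q *ᵥ y + q))⁻¹ • (Q *ᵥ y + q), ⟨⟨?_, ?_⟩, ?_⟩, ?_⟩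
      · have hs : Mnorm M (Q *ᵥ y + q) ^ 2 = (Q *ᵥ y + q) ⬝ᵥ (M *ᵥ (Q *ᵥ y + q)) :=
          Real.sq_sqrt hpos.le
        rw [Mnorm, Matrix.mulVec_smul, dotProduct_smul, smul_dotProduct, ← hs]
        rw [smul_eq_mul, smul_eq_mul, Real.sqrt_eq_one]
        field_simp
      · rw [Matrix.mulVec_smul, dotProduct_smul, hxq]
        simpa using hn
      · rw [hRsc _ _ (inv_ne_zero hn.ne'), ← hρq]; exact h
      · rw [hpsc _ _ (inv_ne_zero hn.ne'), hpx]
  -- chi nonneg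
  have hχ : 0 ≤ χP := by
    have hBpos : ∀ v, v ≠ 0 → 0 < v ⬝ᵥ (B *ᵥ v) := by
      intro v hv
      rw [← hBB]
      apply dot_pos' hA
      intro h0
      apply hv
      have := hQQ v
      rw [h0] at this
      simp only [zero_dotProduct] at this
      exact dotProduct_self_eq_zero.mp this.symm
    have hmin : 0 < ximin := by
      obtain ⟨v, hv, h⟩ := hximin.1
      have h1 := hBpos v hv
      rw [h, dotProduct_smul, smul_eq_mul] at h1
      exact (pos_iff_pos_of_mul_pos h1).mpr (dot_pos' hP hv)
    have hmax : ximin ≤ ximax := hximax.2 hximin.1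
    have : 0 < lam 1 := hlam0.trans hlam01
    have : 0 < ximax := by linarith
    rw [hχP]
    positivity
  have hρhalf : 2 * ρq ≤ lam 0 + lam 1 := by
    have : (lam 1 - lam 0) / (2 + χP) ≤ (lam 1 - lam 0) / 2 :=
      div_le_div_of_nonneg_left (by linarith) (by norm_num) (by linarith)
    linarith
  have hgap : 0 < lam 1 - lam 0 := by linarith
  -- B - rho I is PSD
  have hpsd : ∀ y, ρq * (y ⬝ᵥ y) ≤ y ⬝ᵥ (B *ᵥ y) := by
    intro y
    by_cases hy0 : y = 0
    · simp [hy0]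
    have hN : 0 < y ⬝ᵥ y := lt_of_le_of_ne (hyy y) fun h => hy0 (dotProduct_self_eq_zero.mp h.symm)
    have g1 := gap (Q *ᵥ y)
    have g2 := gap q
    rw [hQQ, hBB] at g1
    rw [hq1, ← hρ] at g2
    set N := y ⬝ᵥ y with hNd
    set c := u 0 ⬝ᵥ (M *ᵥ q) with hc
    set d := u 0 ⬝ᵥ (M *ᵥ (Q *ᵥ y)) with hd
    have hbes : 0 ≤ N * (N - N * c^2 - d^2) := by
      have h := dot_nonneg' hM (N • u 0 - (N * c) • q - d • (Q *ᵥ y))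
      simp only [Matrix.mulVec_sub, Matrix.mulVec_smul, dotProduct_sub, sub_dotProduct,
        smul_dotProduct, dotProduct_smul, smul_eq_mul, hu00, hq1, hqQ, hQQ, hMs q (u 0),
        hMs (Q *ᵥ y) (u 0), hMs (Q *ᵥ y) q, ← hc, ← hd, ← hNd] at h
      nlinarith
    have hbes' : 0 ≤ N - N * c^2 - d^2 := nonneg_of_mul_nonneg_right hbes hN
    have e1 := mul_le_mul_of_nonneg_left g2 hN.le
    have e2 := mul_nonneg hgap.le hbes'
    have e3 := mul_le_mul_of_nonneg_left hρhalf hN.le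
    nlinarith
  -- facts about u 0 and ystar
  have hystarx : Q *ᵥ ystar + q = (q ⬝ᵥ (M *ᵥ u 0))⁻¹ • u 0 := by
    rw [hystar]; exact hback _ hqu1.ne'
  have hval : phiAux B b ρq ystar = lam 0 := by
    rw [hphi, hystarx, hRsc _ _ (inv_ne_zero hqu1.ne'), Rq, heig, dotProduct_smul, hu00]
    simp
  have hlow : ∀ y, lam 0 ≤ phiAux B b ρq y := by
    intro y
    rw [hphi, Rq, le_div_iff₀ (by rw [hxM]; linarith [hyy y])]
    have h1 := gap (Q *ᵥ y + q)
    have h2 := hres (Q *ᵥ y + q)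
    have h3 := dot_nonneg' hM ((Q *ᵥ y + q) - (u 0 ⬝ᵥ (M *ᵥ (Q *ᵥ y + q))) • u 0)
    rw [h2] at h3
    nlinarith [mul_nonneg hgap.le h3]
  have huniq : ∀ y, phiAux B b ρq y ≤ lam 0 → y = ystar := by
    intro y hy
    rw [hphi, Rq, div_le_iff₀ (by rw [hxM]; linarith [hyy y])] at hy
    have h1 := gap (Q *ᵥ y + q)
    have h2 := hres (Q *ᵥ y + q)
    have h4 : (Q *ᵥ y + q) - (u 0 ⬝ᵥ (M *ᵥ (Q *ᵥ y + q))) • u 0 = 0 := by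
      by_contra hne
      have h3 := dot_pos' hM hne
      rw [h2] at h3
      nlinarith [mul_pos hgap h3]
    have h5 := sub_eq_zero.mp h4
    have h6 : u 0 ⬝ᵥ (M *ᵥ (Q *ᵥ y + q)) ≠ 0 := by
      intro h0
      have h7 := hxq y
      rw [h0, zero_smul] at h5
      rw [h5] at h7
      simp at h7
    rw [← hpx y, h5, hpsc _ _ h6, hystar]
  have hmem : ystar ∈ psiMap M q Q '' (Xset A M q) := by
    rw [hY]
    have h := hval
    rw [phiAux, div_eq_iff (by linarith [hyy ystar])] at h
    nlinarith [hyy ystar]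
  refine ⟨?_, hmem, fun y _ => hval ▸ hlow y, fun y _ h => huniq y (hval ▸ h _ hmem), hval, ?_⟩
  · intro y hy z hz s t hs ht hst
    rw [hY] at hy hz ⊢
    have h := hpsd (y - z)
    have hBs : z ⬝ᵥ (B *ᵥ y) = y ⬝ᵥ (B *ᵥ z) := by
      have h1 : Bᵀ = B := by
        have : Aᵀ = A := by simpa using hA.isHermitian.eq
        rw [hB]; simp [Matrix.transpose_mul, this, Matrix.mul_assoc]
      rw [Matrix.dotProduct_mulVec, ← Matrix.mulVec_transpose, h1, dotProduct_comm]
    simp only [Matrix.mulVec_add, Matrix.mulVec_sub, Matrix.mulVec_smul, dotProduct_sub,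
      sub_dotProduct, dotProduct_add, add_dotProduct, smul_dotProduct, dotProduct_smul,
      smul_eq_mul, hBs, dotProduct_comm z y] at h ⊢
    obtain rfl : t = 1 - s := by linarith
    have e1 := mul_nonneg (mul_nonneg hs ht) (sub_nonneg.mpr h)
    have e2 := mul_nonneg hs (neg_nonneg.mpr hy)
    have e3 := mul_nonneg ht (neg_nonneg.mpr hz)
    nlinarith
  · have hn : Mnorm M (Q *ᵥ ystar + q) = (q ⬝ᵥ (M *ᵥ u 0))⁻¹ := by
      rw [hystarx, Mnorm, Matrix.mulVec_smul, dotProduct_smul, smul_dotProduct, hu00]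
      simp only [smul_eq_mul, mul_one]
      exact Real.sqrt_mul_self (inv_nonneg.mpr hqu1.le)
    rw [psiDag, hn, hystarx, smul_smul, inv_mul_cancel₀ (inv_ne_zero hqu1.ne'), one_smul]
end
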